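/- Let I ⊆ R be a squarefree monomial ideal and let f = x_{i_1}⋯x_{i_k} be a squarefree monomial of degree k. Then the following five conditions are equivalent to one another, and all of them hold: (i) depth(R/(I + (f))) ≥ depth(R/I) − 1; (ii) depth(R/I) ≤ depth(R/(I : f)); (iii) depth(R/(I + (x_{i_1},…,x_{i_k}))) ≥ depth(R/I) − k; (iv) reg(R/I) ≥ reg(R/(I : f)); (v) reg(R/(I + (f))) ≤ reg(R/I) + k − 1. -/

import Mathlib

/-!
Write `f = x^b`. Everything follows from comparing `R/I` with `R/(I : f)`, together with the exact
sequence `0 → R/(I : f)(-deg f) → R/I → R/(I + (f)) → 0`.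

*Depth.* Let `φ : R → R` be the flat map `x_i ↦ x_i^p`, with `p` larger than the exponents of `f`.
Since `I` is squarefree, `g ↦ φ(g) f` makes `R/(I : f)` a direct summand of `φ_* (R/I)`. By
adjunction `Ext^i(R/m, φ_* (R/I))` vanishes when `Ext^i(φ^* (R/m), R/I)` does, and since `φ^* (R/m)`
is supported at `m` this is the case for `i < depth (R/I)`. Thus the depth does not drop, and the
long exact sequence of `Ext` gives (i); adding the variables of `f` one at a time gives (iii).

*Regularity.* For `M` a graded module, consider partial free resolutions in which the generators of
`F_i` have degrees at most `r + i`. By the horseshoe lemma and Schanuel's lemma, their existence can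
be tested on any choice of generators and is controlled in short exact sequences. When `I` is
monomial, `R/I` is also graded by the degree in a variable `x`, and multiplication by `x` identifies
`R/(I : x)(-1)` with the part of positive `x`-degree. Taking that part is exact and preserves
freeness, a generator `e` of `x`-degree zero being replaced by `x e`, so it raises the bound `r` by
at most one. Hence `reg R/(I : x) ≤ reg R/I`, and iterating gives (iv). The mapping cone of the
exact sequence gives (v) and, by induction on the number of generators, the finiteness of `reg R/I`.
-/

open MvPolynomial CategoryTheory Opposite

noncomputable section

/-- The polynomial ring `K[x_v : v ∈ σ]` over the field `K`. -/
abbrev MvPoly (K : Type) [Field K] (σ : Type) : Type := MvPolynomial σ K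

variable (K : Type) [Field K] (σ : Type)

/-- The graded maximal ideal `m = (x_v : v ∈ σ)` generated by all the variables. -/
def maxIdeal : Ideal (MvPoly K σ) := Ideal.span (Set.range MvPolynomial.X)

/-- The depth of `R/I` with respect to the graded maximal ideal, defined as
`inf { i | Ext^i(R/m, R/I) ≠ 0 }` (with value `⊤` for the zero module). -/
def depthQ (I : Ideal (MvPoly K σ)) : ℕ∞ :=
  sInf { d : ℕ∞ | ∃ i : ℕ, d = i ∧
    Nontrivial (((Ext (MvPoly K σ) (ModuleCat (MvPoly K σ)) i).obj
      (op (ModuleCat.of (MvPoly K σ) (MvPoly K σ ⧸ maxIdeal K σ)))).obj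
      (ModuleCat.of (MvPoly K σ) (MvPoly K σ ⧸ I))) }

/-- The degree-`e` homogeneous component condition, for an integer `e`
(for `e < 0` the component is zero). -/
def HomogComp (e : ℤ) (p : MvPoly K σ) : Prop :=
  if 0 ≤ e then p ∈ homogeneousSubmodule σ K e.toNat else p = 0

/-- `v` is a homogeneous element of degree `e` of the graded free module
`⊕_j R(-dg j)`. -/
def IsHomogVec {m : ℕ} (dg : Fin m → ℤ) (e : ℤ) (v : Fin m → MvPoly K σ) : Prop :=
  ∀ j, HomogComp K σ (e - dg j) (v j)

/-- The degree-`e` homogeneous component of `R/I`. -/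
def QuotComp (I : Ideal (MvPoly K σ)) (e : ℤ) : Submodule K (MvPoly K σ ⧸ I) :=
  if 0 ≤ e then
    Submodule.map (Ideal.Quotient.mkₐ K I).toLinearMap (homogeneousSubmodule σ K e.toNat)
  else ⊥

/-- A graded free resolution of `R/I` by finitely generated graded free modules
`F i = ⊕_{j < rk i} R(-dg i j)`, with degree preserving (degree zero) maps. -/
structure GradedFreeRes (I : Ideal (MvPoly K σ)) where
  rk : ℕ → ℕ
  dg : (i : ℕ) → Fin (rk i) → ℤ
  dmap : (i : ℕ) → ((Fin (rk (i + 1)) → MvPoly K σ) →ₗ[MvPoly K σ] (Fin (rk i) → MvPoly K σ))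
  aug : (Fin (rk 0) → MvPoly K σ) →ₗ[MvPoly K σ] (MvPoly K σ ⧸ I)
  aug_surj : Function.Surjective aug
  exact0 : Function.Exact (dmap 0) aug
  exactS : ∀ i, Function.Exact (dmap (i + 1)) (dmap i)
  graded : ∀ i (e : ℤ) v, IsHomogVec K σ (dg (i + 1)) e v → IsHomogVec K σ (dg i) e (dmap i v)
  aug_graded : ∀ (e : ℤ) v, IsHomogVec K σ (dg 0) e v → aug v ∈ QuotComp K σ I e

/-- `R/I` admits a graded free resolution all of whose twists `dg i j` satisfy
`dg i j - i ≤ r`. -/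
def ResBound (I : Ideal (MvPoly K σ)) (r : ℤ) : Prop :=
  ∃ F : GradedFreeRes K σ I, ∀ i j, F.dg i j - i ≤ r

open Classical in
/-- The Castelnuovo–Mumford regularity of `R/I`: the least `r` bounding the twists of
a graded free resolution of `R/I` (with the convention `⊥ = -∞` for the zero module). -/
def CMreg (I : Ideal (MvPoly K σ)) : WithBot ℤ :=
  if h : ∃ r : ℤ, ResBound K σ I r ∧ ∀ s : ℤ, ResBound K σ I s → r ≤ s
  then ((h.choose : ℤ) : WithBot ℤ) else ⊥

variable {n : ℕ}

/-- The monomial `x^a`. -/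
def mono (K : Type) [Field K] {n : ℕ} (a : Fin n →₀ ℕ) : MvPoly K (Fin n) :=
  MvPolynomial.monomial a 1

/-- A monomial ideal: an ideal generated by monomials. -/
def IsMonomialIdeal (I : Ideal (MvPoly K (Fin n))) : Prop :=
  ∃ S : Set (Fin n →₀ ℕ), I = Ideal.span (mono K '' S)

/-- A squarefree exponent vector. -/
def SqfreeExp (a : Fin n →₀ ℕ) : Prop := ∀ i, a i ≤ 1

/-- A squarefree monomial ideal: an ideal generated by squarefree monomials. -/
def IsSqfreeMonomialIdeal (I : Ideal (MvPoly K (Fin n))) : Prop :=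
  ∃ S : Set (Fin n →₀ ℕ), (∀ a ∈ S, SqfreeExp a) ∧ I = Ideal.span (mono K '' S)

end

/-! ### Vanishing of Ext groups -/

section Ext

universe w v v' u u'

variable {C : Type u} [Category.{v} C] [Abelian C] {D : Type u'} [Category.{v'} D] [Abelian D]

/-- The exactness in degree `i` of the cochain complex `Hom(P, Y)`, spelled out in terms of cocycles
and coboundaries. -/
def HomExactAt (P : ChainComplex C ℕ) (Y : C) (i : ℕ) : Prop :=
  ∀ f : P.X i ⟶ Y, P.d (i + 1) i ≫ f = 0 →
    ∃ g : P.X ((ComplexShape.up ℕ).prev i) ⟶ Y, P.d i ((ComplexShape.up ℕ).prev i) ≫ g = f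

theorem homExactAt_zero_iff {X Y : C} (P : ProjectiveResolution X) :
    HomExactAt P.complex Y 0 ↔ Subsingleton (X ⟶ Y) := by
  let π : P.complex.X 0 ⟶ X := P.π.f 0
  have : Epi π := inferInstanceAs (Epi (P.π.f 0))
  have hd : P.complex.d 1 0 ≫ π = 0 := P.complex_d_comp_π_f_zero
  simp only [HomExactAt, P.complex.shape 0 _ (by simp : ¬(ComplexShape.down ℕ).Rel 0 _),
    Limits.zero_comp, exists_const]
  refine ⟨fun h => subsingleton_of_forall_eq 0 fun a => ?_, fun h f hf => ?_⟩
  · rw [← cancel_epi π, ← h (π ≫ a) (by rw [reassoc_of% hd, Limits.zero_comp]), Limits.comp_zero]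
  · have hdesc : (P.exact₀.desc f hf : X ⟶ Y) = 0 := h.elim _ _
    rw [← P.exact₀.g_desc f hf]
    exact (Limits.comp_zero.symm.trans (congrArg (π ≫ ·) hdesc.symm))

theorem subsingleton_abelianExt_iff_homExactAt [HasExt.{w} C] {X : C} (P : ProjectiveResolution X)
    (Y : C) (i : ℕ) : Subsingleton (Abelian.Ext X Y i) ↔ HomExactAt P.complex Y i := by
  cases i with
  | zero => rw [homExactAt_zero_iff, Abelian.Ext.homEquiv₀.subsingleton_congr]
  | succ i =>
    rw [HomExactAt, (by simp : (ComplexShape.up ℕ).prev (i + 1) = i)]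
    refine ⟨fun h f hf => (P.extMk_eq_zero_iff f _ rfl hf i rfl).1 (Subsingleton.elim _ _),
      fun h => subsingleton_of_forall_eq 0 fun a => ?_⟩
    obtain ⟨f, hf, rfl⟩ := P.extMk_surjective a (i + 2) rfl
    exact (P.extMk_eq_zero_iff f _ rfl hf i rfl).2 (h f hf)

theorem subsingleton_ext_iff_homExactAt (R : Type*) [Ring R] [Linear R C] [EnoughProjectives C]
    {X : C} (P : ProjectiveResolution X) (Y : C) (i : ℕ) :
    Subsingleton (((Ext R C i).obj (op X)).obj Y) ↔ HomExactAt P.complex Y i := by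
  rw [← ModuleCat.isZero_iff_subsingleton, (P.isoExt i Y).isZero_iff,
    ← HomologicalComplex.exactAt_iff_isZero_homology,
    HomologicalComplex.exactAt_iff' _ _ i (i + 1) rfl (by simp),
    ShortComplex.moduleCat_exact_iff]
  rfl

theorem subsingleton_ext_iff_subsingleton_abelianExt (R : Type*) [Ring R] [Linear R C]
    [EnoughProjectives C] [HasExt.{w} C] (X Y : C) (i : ℕ) :
    Subsingleton (((Ext R C i).obj (op X)).obj Y) ↔ Subsingleton (Abelian.Ext X Y i) := by
  rw [subsingleton_ext_iff_homExactAt R (projectiveResolution X),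
    subsingleton_abelianExt_iff_homExactAt (projectiveResolution X)]

theorem homExactAt_map_iff {F : C ⥤ D} {G : D ⥤ C} [F.Additive] (adj : F ⊣ G)
    (P : ChainComplex C ℕ) (Y : D) (i : ℕ) :
    HomExactAt ((F.mapHomologicalComplex _).obj P) Y i ↔ HomExactAt P (G.obj Y) i := by
  have hcomp (j k : ℕ) (f : F.obj (P.X k) ⟶ Y) (f' : F.obj (P.X j) ⟶ Y) :
      F.map (P.d j k) ≫ f = f' ↔ P.d j k ≫ adj.homEquiv _ _ f = adj.homEquiv _ _ f' := by
    rw [← adj.homEquiv_naturality_left, (adj.homEquiv _ _).injective.eq_iff]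
  refine (adj.homEquiv _ _).forall_congr fun f => ?_
  refine imp_congr ((hcomp _ _ f 0).trans ?_)
    ((adj.homEquiv _ _).exists_congr fun g => hcomp _ _ g f)
  rw [adj.homAddEquiv_zero]

theorem subsingleton_abelianExt_obj_iff [EnoughProjectives C] [HasExt.{w} C] [HasExt.{w} D]
    {F : C ⥤ D} {G : D ⥤ C} (adj : F ⊣ G) [F.Additive] [F.PreservesHomology]
    [G.PreservesEpimorphisms] (X : C) (Y : D) (i : ℕ) :
    Subsingleton (Abelian.Ext (F.obj X) Y i) ↔ Subsingleton (Abelian.Ext X (G.obj Y) i) := by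
  have := Functor.preservesProjectiveObjects_of_adjunction_of_preservesEpimorphisms adj
  rw [subsingleton_abelianExt_iff_homExactAt (projectiveResolution X),
    subsingleton_abelianExt_iff_homExactAt (F.mapProjectiveResolution (projectiveResolution X)),
    ← homExactAt_map_iff adj, Functor.mapProjectiveResolution_complex]

theorem subsingleton_abelianExt_of_retract [HasExt.{w} C] {X Y Z : C} {i : ℕ} (r : Retract Y Z)
    (h : Subsingleton (Abelian.Ext X Z i)) : Subsingleton (Abelian.Ext X Y i) := by
  refine subsingleton_of_forall_eq 0 fun a => ?_
  calc
    a = (a.comp (Abelian.Ext.mk₀ r.i) (add_zero i)).comp (Abelian.Ext.mk₀ r.r) (add_zero i) := by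
      rw [Abelian.Ext.comp_assoc_of_third_deg_zero, Abelian.Ext.mk₀_comp_mk₀, r.retract,
        Abelian.Ext.comp_mk₀_id]
    _ = 0 := by rw [h.elim (a.comp _ _) 0, Abelian.Ext.zero_comp]

theorem subsingleton_abelianExt_X₃ [HasExt.{w} C] {S : ShortComplex C} (hS : S.ShortExact) {X : C}
    {i : ℕ} (h₂ : Subsingleton (Abelian.Ext X S.X₂ i))
    (h₁ : Subsingleton (Abelian.Ext X S.X₁ (i + 1))) : Subsingleton (Abelian.Ext X S.X₃ i) := by
  refine subsingleton_of_forall_eq 0 fun a => ?_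
  obtain ⟨y, rfl⟩ := Abelian.Ext.covariant_sequence_exact₃ X hS a rfl (Subsingleton.elim _ _)
  rw [Subsingleton.elim y 0, Abelian.Ext.zero_comp]

end Ext

/-! ### Ideals of a commutative ring -/

section Ideals

variable {A : Type*} [CommRing A]

/-- The injection `A ⧸ (I : f) → A ⧸ I` induced by multiplication by `f`. -/
def colonMul (I : Ideal A) (f : A) : A ⧸ I.colon (Ideal.span {f}) →ₗ[A] A ⧸ I :=
  Submodule.mapQ _ _ (LinearMap.mulRight A f) fun _ hp => Ideal.mem_colon_span_singleton.1 hp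

theorem colonMul_injective (I : Ideal A) (f : A) : Function.Injective (colonMul I f) := by
  refine (injective_iff_map_eq_zero _).2 fun x hx => ?_
  obtain ⟨g, rfl⟩ := Ideal.Quotient.mk_surjective x
  exact Ideal.Quotient.eq_zero_iff_mem.2
    (Ideal.mem_colon_span_singleton.2 (Ideal.Quotient.eq_zero_iff_mem.1 hx))

theorem exact_colonMul_factor (I : Ideal A) (f : A) :
    Function.Exact (colonMul I f)
      (Submodule.factor (le_sup_left : I ≤ I + Ideal.span {f})) := by
  intro x
  obtain ⟨g, rfl⟩ := Ideal.Quotient.mk_surjective x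
  refine (Ideal.Quotient.eq_zero_iff_mem (I := I + Ideal.span {f})).trans ⟨fun hg => ?_, ?_⟩
  · obtain ⟨a, ha, b, hb, rfl⟩ := Submodule.mem_sup.1 hg
    obtain ⟨q, rfl⟩ := Ideal.mem_span_singleton'.1 hb
    refine ⟨Ideal.Quotient.mk _ q, Ideal.Quotient.eq.2 ?_⟩
    simpa using ha
  · rintro ⟨y, hy⟩
    obtain ⟨q, rfl⟩ := Ideal.Quotient.mk_surjective y
    have hq : q * f - g ∈ I := Ideal.Quotient.eq.1 hy
    rw [← sub_sub_cancel (q * f) g]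
    exact sub_mem (Ideal.mem_sup_right (Ideal.mul_mem_left _ q (Ideal.mem_span_singleton_self f)))
      (Ideal.mem_sup_left hq)

theorem colon_span_mul (I : Ideal A) (f g : A) :
    I.colon (Ideal.span {f * g}) = (I.colon (Ideal.span {f})).colon (Ideal.span {g}) := by
  ext p
  simp only [Ideal.mem_colon_span_singleton, mul_assoc, mul_comm f g]

theorem smul_top_quotient_ne_top {I J : Ideal A} (hIJ : I ≤ J) (hJ : J ≠ ⊤) :
    J • (⊤ : Submodule A (A ⧸ I)) ≠ ⊤ := by
  refine fun h => hJ ?_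
  have hmap : J • (⊤ : Submodule A (A ⧸ I)) = Submodule.map I.mkQ J := by
    rw [← Submodule.range_mkQ I, ← Submodule.map_top, ← Submodule.map_smul'', smul_eq_mul,
      Ideal.mul_top]
  rw [← sup_eq_right.2 hIJ, ← Submodule.comap_map_mkQ, ← hmap, h, Submodule.comap_top]

theorem flat_of_coordinates {B ι : Type*} [CommRing B] [Fintype ι] (f : A →+* B) (b : ι → B)
    (ρ : ι → B →+ A) (hsum : ∀ g, ∑ i, f (ρ i g) * b i = g)
    (hmul : ∀ i p g, ρ i (f p * g) = p * ρ i g) : f.Flat := by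
  algebraize [f]
  let u : B →ₗ[A] ι → A := LinearMap.pi fun i =>
    { toFun := ρ i, map_add' := map_add _, map_smul' := fun p g => hmul i p g }
  have hu : Fintype.linearCombination A b ∘ₗ u = LinearMap.id :=
    LinearMap.ext fun g => hsum g
  have : Module.Projective A B := Module.Projective.of_split _ _ hu
  exact inferInstanceAs (Module.Flat A B)

end Ideals

/-! ### Powers of the variables -/

section Expand

variable {σ K : Type*} [CommRing K] {p : ℕ}

theorem injective_add_nsmul (hp : p ≠ 0) (a : σ →₀ ℕ) :
    Function.Injective fun b : σ →₀ ℕ => a + p • b :=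
  (add_right_injective a).comp (nsmul_right_injective hp)

/-- The coordinate at `x^a`, for an exponent vector `a` with entries less than `p`, with respect to
the basis of such monomials of `K[x]` over `K[x^p]`, the latter being identified with `K[x]`. -/
noncomputable def expandCoord (hp : p ≠ 0) (a : σ →₀ ℕ) : MvPolynomial σ K →+ MvPolynomial σ K where
  toFun := AddMonoidAlgebra.comapDomain _ (injective_add_nsmul hp a)
  map_zero' := AddMonoidAlgebra.comapDomain_zero _ _
  map_add' := AddMonoidAlgebra.comapDomain_add _ _

theorem coeff_expandCoord (hp : p ≠ 0) (a b : σ →₀ ℕ) (g : MvPolynomial σ K) :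
    coeff b (expandCoord hp a g) = coeff (a + p • b) g := by
  rfl

theorem expandCoord_expand_mul (hp : p ≠ 0) {a : σ →₀ ℕ} (ha : ∀ i, a i < p)
    (q g : MvPolynomial σ K) : expandCoord hp a (expand p q * g) = q * expandCoord hp a g := by
  induction q using MvPolynomial.induction_on' with
  | add q q' hq hq' => simp only [map_add, add_mul, hq, hq']
  | monomial s c =>
    ext b
    have hle : p • s ≤ a + p • b ↔ s ≤ b := by
      refine forall_congr' fun i => ?_
      have hdiv : (a i + p * b i) / p = b i := by
        rw [Nat.add_mul_div_left _ _ (Nat.pos_of_ne_zero hp), Nat.div_eq_of_lt (ha i), zero_add]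
      simp only [Finsupp.smul_apply, Finsupp.add_apply, smul_eq_mul]
      rw [mul_comm, ← Nat.le_div_iff_mul_le (Nat.pos_of_ne_zero hp), hdiv]
    rw [expand_monomial, coeff_expandCoord, coeff_monomial_mul', coeff_monomial_mul']
    by_cases hs : s ≤ b
    · rw [if_pos (hle.2 hs), if_pos hs, coeff_expandCoord,
        add_tsub_assoc_of_le (nsmul_le_nsmul_right hs p)]
      congr 3
      ext i
      simp [Nat.mul_sub]
    · rw [if_neg (hle.not.2 hs), if_neg hs]

theorem expandCoord_monomial_one [DecidableEq σ] (hp : p ≠ 0) {a r : σ →₀ ℕ}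
    (hr : ∀ i, r i < p) : expandCoord hp a (monomial r (1 : K)) = if r = a then 1 else 0 := by
  ext b
  rw [coeff_expandCoord, coeff_monomial]
  by_cases hb : r = a + p • b
  · have hb0 : b = 0 := by
      ext i
      have hi : r i = a i + p * b i := by simp [hb]
      exact Nat.eq_zero_of_not_pos fun h => absurd (Nat.le_mul_of_pos_right p h) (by grind)
    simp [hb, hb0]
  · rw [if_neg hb]
    split_ifs with hra
    · rw [coeff_one, if_neg]
      rintro rfl
      exact hb (by simp [hra])
    · simp

theorem expandCoord_expand_mul_monomial (hp : p ≠ 0) {a : σ →₀ ℕ} (ha : ∀ i, a i < p)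
    (q : MvPolynomial σ K) : expandCoord hp a (expand p q * monomial a 1) = q := by
  classical
  rw [expandCoord_expand_mul hp ha, expandCoord_monomial_one hp ha, if_pos rfl, mul_one]

/-- The exponent vectors with entries less than `p`. -/
noncomputable def residueExp (a : σ → Fin p) [Finite σ] : σ →₀ ℕ :=
  Finsupp.equivFunOnFinite.symm fun i => a i

theorem residueExp_apply [Finite σ] (a : σ → Fin p) (i : σ) : residueExp a i = a i := rfl

theorem sum_expand_expandCoord_mul [Fintype σ] [DecidableEq σ] (hp : p ≠ 0)
    (g : MvPolynomial σ K) :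
    ∑ a : σ → Fin p, expand p (expandCoord hp (residueExp a) g) * monomial (residueExp a) 1 =
      g := by
  have : NeZero p := ⟨hp⟩
  induction g using MvPolynomial.induction_on' with
  | add g g' hg hg' => simp only [map_add, add_mul, Finset.sum_add_distrib, hg, hg']
  | monomial d c =>
    let r : σ → Fin p := fun i => Fin.ofNat p (d i)
    let q : MvPolynomial σ K := monomial (d.mapRange (· / p) (Nat.zero_div p)) c
    have hd : expand p q * monomial (residueExp r) 1 = monomial d c := by
      rw [expand_monomial, monomial_mul, mul_one]
      congr 2
      ext i
      simp [residueExp_apply, r, Nat.div_add_mod]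
    have hcoord (a : σ → Fin p) : expandCoord hp (residueExp a) (monomial d c) =
        if a = r then q else 0 := by
      have hra : residueExp r = residueExp a ↔ a = r := by
        simp [DFunLike.ext_iff, funext_iff, residueExp_apply, Fin.ext_iff, eq_comm]
      rw [← hd, expandCoord_expand_mul hp fun i => (a i).2,
        expandCoord_monomial_one hp fun i => (r i).2]
      simp [hra]
    simp [hcoord, hd, apply_ite, ite_mul]

theorem flat_expand [Finite σ] (hp : p ≠ 0) :
    (expand p : MvPolynomial σ K →ₐ[K] MvPolynomial σ K).toRingHom.Flat := by
  classical
  have := Fintype.ofFinite σ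
  exact flat_of_coordinates _ (fun a : σ → Fin p => monomial (residueExp a) 1)
    (fun a => expandCoord hp (residueExp a)) (sum_expand_expandCoord_mul hp)
    fun a => expandCoord_expand_mul hp fun i => (a i).2

end Expand

/-! ### Depth of squarefree monomial ideals -/

section SquarefreeRetract

variable {K : Type} [Field K] {n : ℕ} {S : Set (Fin n →₀ ℕ)}

theorem mem_span_mono_iff {g : MvPoly K (Fin n)} :
    g ∈ Ideal.span (mono K '' S) ↔ ∀ a ∈ g.support, ∃ s ∈ S, s ≤ a :=
  mem_ideal_span_monomial_image

theorem mem_colon_mono_iff {b : Fin n →₀ ℕ} {g : MvPoly K (Fin n)} :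
    g ∈ (Ideal.span (mono K '' S)).colon (Ideal.span {mono K b}) ↔
      ∀ a ∈ g.support, ∃ s ∈ S, s ≤ a + b := by
  rw [Ideal.mem_colon_span_singleton, mem_span_mono_iff]
  have hcoeff (a : Fin n →₀ ℕ) : coeff (a + b) (g * mono K b) = coeff a g := by
    rw [mono, coeff_mul_monomial, mul_one]
  refine ⟨fun h a ha => h (a + b) ?_, fun h c hc => ?_⟩
  · rwa [mem_support_iff, hcoeff, ← mem_support_iff]
  · rw [mem_support_iff, mono, coeff_mul_monomial'] at hc
    obtain ⟨hbc, hc⟩ := ite_ne_right_iff.1 hc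
    rw [mul_one, ← mem_support_iff] at hc
    simpa [tsub_add_cancel_of_le hbc] using h _ hc

theorem expand_mul_mono_mem {p : ℕ} (hp : p ≠ 0) {b : Fin n →₀ ℕ} {g : MvPoly K (Fin n)}
    (hg : g ∈ (Ideal.span (mono K '' S)).colon (Ideal.span {mono K b})) :
    expand p g * mono K b ∈ Ideal.span (mono K '' S) := by
  classical
  rw [mem_colon_mono_iff] at hg
  rw [← Ideal.mem_colon_span_singleton, mem_colon_mono_iff]
  intro a ha
  obtain ⟨c, hc, rfl⟩ := Finset.mem_image.1 (support_expand_subset g ha)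
  obtain ⟨s, hs, hle⟩ := hg c hc
  exact ⟨s, hs, hle.trans (add_le_add_left (le_self_nsmul zero_le hp) b)⟩

-- Squarefreeness of the generators enters here: `s ≤ b + p • a` implies `s ≤ b + a`.
theorem expandCoord_mem_colon (hS : ∀ s ∈ S, SqfreeExp s) {p : ℕ} (hp : p ≠ 0) (b : Fin n →₀ ℕ)
    {g : MvPoly K (Fin n)} (hg : g ∈ Ideal.span (mono K '' S)) :
    expandCoord hp b g ∈ (Ideal.span (mono K '' S)).colon (Ideal.span {mono K b}) := by
  rw [mem_colon_mono_iff]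
  intro a ha
  rw [mem_support_iff, coeff_expandCoord, ← mem_support_iff] at ha
  obtain ⟨s, hs, hle⟩ := mem_span_mono_iff.1 hg _ ha
  refine ⟨s, hs, fun i => ?_⟩
  have hi : s i ≤ b i + p * a i := hle i
  have hs1 : s i ≤ 1 := hS s hs i
  rcases Nat.eq_zero_or_pos (a i) with h0 | h0
  · simpa [h0] using hi
  · exact hs1.trans (h0.trans_le (Nat.le_add_right _ _))

end SquarefreeRetract

section Retract

variable {A : Type*} [CommRing A]

/-- If `g ↦ φ(g) t` and its left inverse `ρ` descend to maps between `A ⧸ J` and `A ⧸ I`, then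
`A ⧸ J` is a retract of `A ⧸ I` with scalars restricted along `φ`. -/
noncomputable def quotientRetract (φ : A →+* A) {I J : Ideal A} (t : A) (ρ : A →+ A)
    (hJ : ∀ g ∈ J, φ g * t ∈ I) (hI : ∀ g ∈ I, ρ g ∈ J) (hρ : ∀ q g, ρ (φ q * g) = q * ρ g)
    (hρt : ∀ g, ρ (φ g * t) = g) :
    Retract (ModuleCat.of A (A ⧸ J))
      ((ModuleCat.restrictScalars φ).obj (ModuleCat.of A (A ⧸ I))) where
  i := ModuleCat.ofHom (Y := (ModuleCat.restrictScalars φ).obj (ModuleCat.of A (A ⧸ I)))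
    { QuotientAddGroup.map J.toAddSubgroup I.toAddSubgroup
        ((AddMonoidHom.mulRight t).comp φ.toAddMonoidHom) hJ with
      map_smul' := fun q x => by
        obtain ⟨g, rfl⟩ := Ideal.Quotient.mk_surjective x
        exact congrArg (Ideal.Quotient.mk I) (by simp [mul_assoc]) }
  r := ModuleCat.ofHom (X := (ModuleCat.restrictScalars φ).obj (ModuleCat.of A (A ⧸ I)))
    (Y := A ⧸ J)
    { QuotientAddGroup.map I.toAddSubgroup J.toAddSubgroup ρ hI with
      map_smul' := fun q x => by
        obtain ⟨g, rfl⟩ := Ideal.Quotient.mk_surjective (I := I) x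
        exact congrArg (Ideal.Quotient.mk J) (hρ q g) }
  retract := by
    refine ModuleCat.hom_ext (LinearMap.ext fun x => ?_)
    obtain ⟨g, rfl⟩ := Ideal.Quotient.mk_surjective x
    exact congrArg (Ideal.Quotient.mk J) (hρt g)

end Retract

section Depth

universe u

theorem finite_moduleCatOf_quotient {A : Type u} [CommRing A] (J : Ideal A) :
    Module.Finite A (ModuleCat.of A (A ⧸ J)) :=
  inferInstanceAs (Module.Finite A (A ⧸ J))

theorem finite_extendScalars {A B : Type u} [CommRing A] [CommRing B] (φ : A →+* B)
    (M : ModuleCat.{u} A) [Module.Finite A M] :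
    Module.Finite B ((ModuleCat.extendScalars φ).obj M) := by
  algebraize [φ]
  exact inferInstanceAs (Module.Finite B (TensorProduct A B M))

theorem map_mem_annihilator_extendScalars {A B : Type u} [CommRing A] [CommRing B] (φ : A →+* B)
    (M : ModuleCat.{u} A) {a : A} (ha : a ∈ Module.annihilator A M) :
    φ a ∈ Module.annihilator B ((ModuleCat.extendScalars φ).obj M) := by
  algebraize [φ]
  suffices h : φ a ∈ Module.annihilator B (TensorProduct A B M) from h
  refine Module.mem_annihilator.2 fun t => ?_
  induction t with
  | zero => rw [smul_zero]
  | add x y hx hy => rw [smul_add, hx, hy, add_zero]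
  | tmul b x =>
    rw [TensorProduct.smul_tmul', show φ a • b = a • b from (Algebra.smul_def a b).symm,
      TensorProduct.smul_tmul, Module.mem_annihilator.1 ha, TensorProduct.tmul_zero]

theorem support_extendScalars_expand_subset {K σ : Type} [Field K] [Finite σ] (p : ℕ) :
    Module.support (MvPoly K σ)
      ((ModuleCat.extendScalars (expand p : MvPoly K σ →ₐ[K] MvPoly K σ).toRingHom).obj
        (ModuleCat.of (MvPoly K σ) (MvPoly K σ ⧸ maxIdeal K σ))) ⊆
      PrimeSpectrum.zeroLocus (maxIdeal K σ) := by
  have := finite_moduleCatOf_quotient (maxIdeal K σ)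
  have := finite_extendScalars (expand p : MvPoly K σ →ₐ[K] MvPoly K σ).toRingHom
    (ModuleCat.of (MvPoly K σ) (MvPoly K σ ⧸ maxIdeal K σ))
  rw [Module.support_eq_zeroLocus, PrimeSpectrum.zeroLocus_subset_zeroLocus_iff, maxIdeal,
    Ideal.span_le]
  rintro _ ⟨i, rfl⟩
  refine ⟨p, ?_⟩
  rw [← expand_X p i]
  refine map_mem_annihilator_extendScalars (expand p : MvPoly K σ →ₐ[K] MvPoly K σ).toRingHom _ ?_
  exact (Ideal.annihilator_quotient (I := maxIdeal K σ)).ge (Ideal.subset_span ⟨i, rfl⟩)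

theorem subsingleton_abelianExt_of_support_subset {A : Type u} [CommRing A] [IsNoetherianRing A]
    {J : Ideal A} {M N : ModuleCat.{u} A} [Module.Finite A M] [Module.Finite A N]
    (hM : J • (⊤ : Submodule A M) ≠ ⊤) (hN : Module.support A N ⊆ PrimeSpectrum.zeroLocus J)
    {d : ℕ} (hd : ∀ i < d, Subsingleton (Abelian.Ext (ModuleCat.of A (A ⧸ J)) M i)) {i : ℕ}
    (hi : i < d) : Subsingleton (Abelian.Ext N M i) := by
  have := finite_moduleCatOf_quotient J
  have hsupp : Module.support A (ModuleCat.of A (A ⧸ J)) = PrimeSpectrum.zeroLocus J := by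
    change Module.support A (A ⧸ J) = _
    rw [Module.support_eq_zeroLocus, Ideal.annihilator_quotient]
  obtain ⟨rs, rfl, hmem, hreg⟩ := ModuleCat.exists_isRegular_of_exists_subsingleton_ext J d M
    hM.lt_top _ hsupp hd
  exact ModuleCat.subsingleton_ext_of_exists_isRegular J N hN M hM.lt_top rs hmem hreg i hi

variable {K : Type} [Field K] {σ : Type}

theorem le_depthQ_iff {I : Ideal (MvPoly K σ)} {d : ℕ∞} :
    d ≤ depthQ K σ I ↔ ∀ i : ℕ, (i : ℕ∞) < d →
      Subsingleton (Abelian.Ext (ModuleCat.of (MvPoly K σ) (MvPoly K σ ⧸ maxIdeal K σ))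
        (ModuleCat.of (MvPoly K σ) (MvPoly K σ ⧸ I)) i) := by
  simp only [depthQ, le_sInf_iff, Set.mem_ofPred_eq, forall_exists_index, and_imp]
  refine ⟨fun h i hi => ?_, fun h e i he hne => ?_⟩
  · rw [← subsingleton_ext_iff_subsingleton_abelianExt (MvPoly K σ),
      ← not_nontrivial_iff_subsingleton]
    exact fun hne => hi.not_ge (h _ i rfl hne)
  · rw [he]
    by_contra! hlt
    have := (subsingleton_ext_iff_subsingleton_abelianExt (MvPoly K σ) _ _ _).2 (h i hlt)
    exact not_subsingleton _ this

theorem depthQ_sub_one_le_depthQ_add {I : Ideal (MvPoly K σ)} {f : MvPoly K σ}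
    (h : depthQ K σ I ≤ depthQ K σ (I.colon (Ideal.span {f}))) :
    depthQ K σ I - 1 ≤ depthQ K σ (I + Ideal.span {f}) := by
  rw [le_depthQ_iff]
  intro i hi
  have hi' : ((i + 1 : ℕ) : ℕ∞) < depthQ K σ I := by
    rw [Nat.cast_add_one]
    exact lt_tsub_iff_right.1 hi
  have hexact := exact_colonMul_factor I f
  let S : ShortComplex (ModuleCat (MvPoly K σ)) :=
    ShortComplex.mk (ModuleCat.ofHom (colonMul I f))
      (ModuleCat.ofHom (Submodule.factor (le_sup_left : I ≤ I + Ideal.span {f})))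
      (ModuleCat.hom_ext hexact.linearMap_comp_eq_zero)
  have hS : S.ShortExact :=
    { exact := (ShortComplex.ShortExact.moduleCat_exact_iff_function_exact S).2 hexact
      mono_f := (ModuleCat.mono_iff_injective _).2 (colonMul_injective I f)
      epi_g := (ModuleCat.epi_iff_surjective _).2
        (Submodule.factor_surjective (le_sup_left : I ≤ I + _)) }
  exact subsingleton_abelianExt_X₃ hS
    (le_depthQ_iff.1 le_rfl i ((Nat.cast_lt.2 i.lt_succ_self).trans hi'))
    (le_depthQ_iff.1 h (i + 1) hi')

end Depth

section SquarefreeDepth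

variable {K : Type} [Field K] {n : ℕ}

theorem mem_maxIdeal_iff {σ : Type} {g : MvPoly K σ} :
    g ∈ maxIdeal K σ ↔ constantCoeff g = 0 := by
  rw [maxIdeal, ← Set.image_univ, mem_ideal_span_X_image, constantCoeff_eq, ← notMem_support_iff]
  refine ⟨fun h h0 => ?_, fun h a ha => ?_⟩
  · simpa using h 0 h0
  · simpa using Finsupp.ne_iff.1 (ne_of_mem_of_not_mem ha h)

theorem maxIdeal_ne_top {σ : Type} : maxIdeal K σ ≠ ⊤ := by
  rw [Ideal.ne_top_iff_one, mem_maxIdeal_iff, map_one]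
  exact one_ne_zero

theorem IsMonomialIdeal.le_maxIdeal {I : Ideal (MvPoly K (Fin n))} (hI : IsMonomialIdeal K I)
    (htop : I ≠ ⊤) : I ≤ maxIdeal K (Fin n) := by
  obtain ⟨S, rfl⟩ := hI
  refine Ideal.span_le.2 ?_
  rintro _ ⟨s, hs, rfl⟩
  rw [SetLike.mem_coe, mem_maxIdeal_iff, mono, constantCoeff_monomial, if_neg]
  rintro rfl
  exact htop (Ideal.eq_top_of_isUnit_mem _ (Ideal.subset_span ⟨0, hs, rfl⟩) isUnit_one)

theorem IsSqfreeMonomialIdeal.isMonomialIdeal {I : Ideal (MvPoly K (Fin n))}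
    (hI : IsSqfreeMonomialIdeal K I) : IsMonomialIdeal K I :=
  let ⟨S, _, h⟩ := hI
  ⟨S, h⟩

-- `R/(I : x^b)` is a retract of the restriction of `R/I` along `x_i ↦ x_i ^ p` for every `p` larger
-- than the exponents in `b`, so adjunction bounds its `Ext` groups.
theorem depthQ_le_depthQ_colon {I : Ideal (MvPoly K (Fin n))} (hI : IsSqfreeMonomialIdeal K I)
    (b : Fin n →₀ ℕ) :
    depthQ K (Fin n) I ≤ depthQ K (Fin n) (I.colon (Ideal.span {mono K b})) := by
  rcases eq_or_ne I ⊤ with rfl | htop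
  · exact (congrArg (depthQ K (Fin n)) Submodule.top_colon).ge
  have hM := smul_top_quotient_ne_top (hI.isMonomialIdeal.le_maxIdeal htop) maxIdeal_ne_top
  obtain ⟨S, hS, rfl⟩ := hI
  have hp : b.degree + 1 ≠ 0 := b.degree.succ_ne_zero
  have hb (i : Fin n) : b i < b.degree + 1 := Nat.lt_succ_of_le (Finsupp.le_degree i b)
  set φ : MvPoly K (Fin n) →+* MvPoly K (Fin n) := (expand (b.degree + 1)).toRingHom
  have hflat : φ.Flat := flat_expand hp
  have := ModuleCat.preservesFiniteLimits_extendScalars_of_flat hflat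
  have := (ModuleCat.extendRestrictScalarsAdj φ).left_adjoint_additive
  refine le_depthQ_iff.2 fun i hi => subsingleton_abelianExt_of_retract
    (quotientRetract φ (mono K b) (expandCoord hp b) (fun _ => expand_mul_mono_mem hp)
      (fun _ => expandCoord_mem_colon hS hp b) (expandCoord_expand_mul hp hb)
      (expandCoord_expand_mul_monomial hp hb)) ?_
  rw [← subsingleton_abelianExt_obj_iff (ModuleCat.extendRestrictScalarsAdj φ)]
  have := finite_moduleCatOf_quotient (Ideal.span (mono K '' S))
  have := finite_moduleCatOf_quotient (maxIdeal K (Fin n))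
  have := finite_extendScalars φ (ModuleCat.of _ (MvPoly K (Fin n) ⧸ maxIdeal K (Fin n)))
  refine subsingleton_abelianExt_of_support_subset hM (support_extendScalars_expand_subset _)
    (fun j hj => le_depthQ_iff.1 le_rfl j ?_) i.lt_succ_self
  exact (Nat.cast_le.2 (Nat.lt_succ_iff.1 hj)).trans_lt hi

theorem IsSqfreeMonomialIdeal.add_span_X {I : Ideal (MvPoly K (Fin n))}
    (hI : IsSqfreeMonomialIdeal K I) (i : Fin n) :
    IsSqfreeMonomialIdeal K (I + Ideal.span {X i}) := by
  obtain ⟨S, hS, rfl⟩ := hI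
  refine ⟨S ∪ {Finsupp.single i 1}, ?_, ?_⟩
  · rintro a (ha | rfl) j
    · exact hS a ha j
    · rw [Finsupp.single_apply]
      split_ifs <;> simp
  · rw [Set.image_union, Ideal.span_union, Set.image_singleton]
    rfl

theorem depthQ_sub_card_le_depthQ_add {I : Ideal (MvPoly K (Fin n))}
    (hI : IsSqfreeMonomialIdeal K I) (T : Finset (Fin n)) :
    depthQ K (Fin n) I - T.card ≤
      depthQ K (Fin n) (I + Ideal.span (X '' (T : Set (Fin n)))) := by
  induction T using Finset.induction_on generalizing I with
  | empty => simp
  | insert i T hi ih =>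
    have hX : depthQ K (Fin n) I - 1 ≤ depthQ K (Fin n) (I + Ideal.span {X i}) :=
      depthQ_sub_one_le_depthQ_add (f := mono K (Finsupp.single i 1))
        (depthQ_le_depthQ_colon hI _)
    calc
      depthQ K (Fin n) I - (insert i T).card = depthQ K (Fin n) I - 1 - T.card := by
        rw [Finset.card_insert_of_notMem hi, Nat.cast_add_one, add_comm, tsub_tsub]
      _ ≤ depthQ K (Fin n) (I + Ideal.span {X i}) - T.card :=
        tsub_le_tsub_right hX _
      _ ≤ depthQ K (Fin n) (I + Ideal.span {X i} + Ideal.span (X '' (T : Set (Fin n)))) :=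
        ih (hI.add_span_X i)
      _ = depthQ K (Fin n) (I + Ideal.span (X '' (↑(insert i T) : Set (Fin n)))) := by
        rw [Finset.coe_insert, Set.image_insert_eq, Ideal.span_insert, add_assoc]
        rfl

end SquarefreeDepth

/-! ### Graded modules over a polynomial ring -/

section WeightedComponents

variable {σ K Γ : Type*} [CommRing K] [AddCommGroup Γ]

theorem weightedHomogeneousComponent_self (w : σ → Γ) (e : Γ) (p : MvPolynomial σ K) :
    weightedHomogeneousComponent w e (weightedHomogeneousComponent w e p) =
      weightedHomogeneousComponent w e p :=
  (weightedHomogeneousComponent_isWeightedHomogeneous e p).weightedHomogeneousComponent_same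

theorem weightedHomogeneousComponent_of_ne (w : σ → Γ) {d e : Γ} (h : d ≠ e)
    (p : MvPolynomial σ K) :
    weightedHomogeneousComponent w d (weightedHomogeneousComponent w e p) = 0 :=
  (weightedHomogeneousComponent_isWeightedHomogeneous e p).weightedHomogeneousComponent_ne d h

theorem weightedHomogeneousComponent_comm (w w' : σ → Γ) (d e : Γ) (p : MvPolynomial σ K) :
    weightedHomogeneousComponent w d (weightedHomogeneousComponent w' e p) =
      weightedHomogeneousComponent w' e (weightedHomogeneousComponent w d p) := by
  classical
  ext a
  simp only [coeff_weightedHomogeneousComponent]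
  split_ifs <;> rfl

theorem weightedHomogeneousComponent_monomial [DecidableEq Γ] (w : σ → Γ) (e : Γ) (a : σ →₀ ℕ)
    (c : K) : weightedHomogeneousComponent w e (monomial a c) =
      if e = Finsupp.weight w a then monomial a c else 0 :=
  weightedHomogeneousComponent_of_mem (isWeightedHomogeneous_monomial w a c rfl)

theorem weightedHomogeneousComponent_monomial_mul (w : σ → Γ) (e : Γ) (a : σ →₀ ℕ) (c : K)
    (p : MvPolynomial σ K) : weightedHomogeneousComponent w e (monomial a c * p) =
      monomial a c * weightedHomogeneousComponent w (e - Finsupp.weight w a) p := by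
  classical
  ext b
  rw [coeff_weightedHomogeneousComponent, coeff_monomial_mul', coeff_monomial_mul',
    coeff_weightedHomogeneousComponent]
  by_cases h : a ≤ b
  · have hb : Finsupp.weight w b = Finsupp.weight w (b - a) + Finsupp.weight w a := by
      rw [← map_add, tsub_add_cancel_of_le h]
    simp only [if_pos h, hb, eq_sub_iff_add_eq, mul_ite, mul_zero]
  · simp only [if_neg h, ite_self]

end WeightedComponents

/-- A `ℤ`-grading of a module over the polynomial ring whose variables have degrees `w`, encoded
by the projections `proj e` onto the homogeneous components. That the components exhaust the
module is not part of the structure. -/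
structure Grading (K : Type) [CommRing K] {σ : Type} (w : σ → ℤ) (M : Type) [AddCommGroup M]
    [Module (MvPolynomial σ K) M] where
  proj : ℤ → M →+ M
  proj_self : ∀ e m, proj e (proj e m) = proj e m
  proj_of_ne : ∀ {d e}, d ≠ e → ∀ m, proj d (proj e m) = 0
  proj_monomial_smul : ∀ e a (c : K) m, proj e ((monomial a c : MvPolynomial σ K) • m) =
    (monomial a c : MvPolynomial σ K) • proj (e - Finsupp.weight w a) m

section Gradings

variable {K : Type} [CommRing K] {σ : Type} {w : σ → ℤ}

variable {M N P : Type} [AddCommGroup M] [Module (MvPolynomial σ K) M]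
  [AddCommGroup N] [Module (MvPolynomial σ K) N] [AddCommGroup P] [Module (MvPolynomial σ K) P]

local notation "R" => MvPolynomial σ K

/-- A degree-preserving linear map. -/
def IsGradedHom (𝓜 : Grading K w M) (𝓝 : Grading K w N) (f : M →ₗ[R] N) : Prop :=
  ∀ e m, f (𝓜.proj e m) = 𝓝.proj e (f m)

theorem IsGradedHom.comp {𝓜 : Grading K w M} {𝓝 : Grading K w N} {𝓟 : Grading K w P}
    {g : N →ₗ[R] P} {f : M →ₗ[R] N} (hg : IsGradedHom 𝓝 𝓟 g) (hf : IsGradedHom 𝓜 𝓝 f) :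
    IsGradedHom 𝓜 𝓟 (g ∘ₗ f) := fun e m => by
  rw [LinearMap.comp_apply, hf, hg, LinearMap.comp_apply]

namespace Grading

/-- The grading of the polynomial ring in which the variables have degrees `w`. -/
noncomputable def ring (K : Type) [CommRing K] (w : σ → ℤ) :
    Grading K w (MvPolynomial σ K) where
  proj e := (weightedHomogeneousComponent w e).toAddMonoidHom
  proj_self := weightedHomogeneousComponent_self w
  proj_of_ne := weightedHomogeneousComponent_of_ne w
  proj_monomial_smul := weightedHomogeneousComponent_monomial_mul w

/-- The twist `M(s)`, with `M(s)_e = M_{e+s}`. -/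
def shift (𝓜 : Grading K w M) (s : ℤ) : Grading K w M where
  proj e := 𝓜.proj (e + s)
  proj_self e := 𝓜.proj_self (e + s)
  proj_of_ne h := 𝓜.proj_of_ne fun hs => h (add_right_cancel hs)
  proj_monomial_smul e a c m := by
    rw [𝓜.proj_monomial_smul, sub_add_eq_add_sub]

/-- The componentwise grading of a product of graded modules. -/
def pi {ι : Type} {M : ι → Type} [∀ j, AddCommGroup (M j)] [∀ j, Module R (M j)]
    (𝓜 : ∀ j, Grading K w (M j)) : Grading K w (∀ j, M j) where
  proj e := AddMonoidHom.pi fun j => ((𝓜 j).proj e).comp (Pi.evalAddMonoidHom M j)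
  proj_self e v := funext fun j => (𝓜 j).proj_self e (v j)
  proj_of_ne h v := funext fun j => (𝓜 j).proj_of_ne h (v j)
  proj_monomial_smul e a c v := funext fun j => (𝓜 j).proj_monomial_smul e a c (v j)

/-- The direct sum of two graded modules. -/
def prod (𝓜 : Grading K w M) (𝓝 : Grading K w N) : Grading K w (M × N) where
  proj e := (𝓜.proj e).prodMap (𝓝.proj e)
  proj_self e m := Prod.ext (𝓜.proj_self e m.1) (𝓝.proj_self e m.2)
  proj_of_ne h m := Prod.ext (𝓜.proj_of_ne h m.1) (𝓝.proj_of_ne h m.2)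
  proj_monomial_smul e a c m :=
    Prod.ext (𝓜.proj_monomial_smul e a c m.1) (𝓝.proj_monomial_smul e a c m.2)

/-- The graded free module `⊕ⱼ R(-d j)`, whose `j`-th basis vector has degree `d j`. -/
noncomputable def free (w : σ → ℤ) {ι : Type} (d : ι → ℤ) : Grading K w (ι → R) :=
  pi fun j => (ring K w).shift (-d j)

theorem free_proj_apply {ι : Type} (d : ι → ℤ) (e : ℤ) (v : ι → R) (j : ι) :
    (free w d).proj e v j = weightedHomogeneousComponent w (e - d j) (v j) := rfl

/-- The homogeneous submodules of a graded module. -/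
def IsHomogeneous (𝓜 : Grading K w M) (L : Submodule R M) : Prop :=
  ∀ e, ∀ m ∈ L, 𝓜.proj e m ∈ L

/-- The grading induced on a homogeneous submodule. -/
noncomputable def restrict (𝓜 : Grading K w M) {L : Submodule R M} (hL : 𝓜.IsHomogeneous L) :
    Grading K w L where
  proj e := ((𝓜.proj e).comp L.subtype.toAddMonoidHom).codRestrict L fun m => hL e m m.2
  proj_self e m := Subtype.ext (𝓜.proj_self e m)
  proj_of_ne h m := Subtype.ext (𝓜.proj_of_ne h (m : M))
  proj_monomial_smul e a c m := Subtype.ext (𝓜.proj_monomial_smul e a c m)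

/-- The grading induced on the quotient by a homogeneous submodule. -/
noncomputable def quotient (𝓜 : Grading K w M) {L : Submodule R M} (hL : 𝓜.IsHomogeneous L) :
    Grading K w (M ⧸ L) where
  proj e := QuotientAddGroup.map L.toAddSubgroup L.toAddSubgroup (𝓜.proj e) (hL e)
  proj_self e := L.mkQ_surjective.forall.2 fun m => congrArg L.mkQ (𝓜.proj_self e m)
  proj_of_ne h := L.mkQ_surjective.forall.2 fun m => congrArg L.mkQ (𝓜.proj_of_ne h m)
  proj_monomial_smul e a c := L.mkQ_surjective.forall.2 fun m =>
    congrArg L.mkQ (𝓜.proj_monomial_smul e a c m)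

theorem isGradedHom_mkQ (𝓜 : Grading K w M) {L : Submodule R M} (hL : 𝓜.IsHomogeneous L) :
    IsGradedHom 𝓜 (𝓜.quotient hL) L.mkQ := fun _ _ => rfl

theorem proj_smul_of_proj_eq (𝓜 : Grading K w M) {d : ℤ} {m : M} (hm : 𝓜.proj d m = m) (e : ℤ)
    (p : R) : 𝓜.proj e (p • m) = weightedHomogeneousComponent w (e - d) p • m := by
  induction p using MvPolynomial.induction_on' with
  | add p q hp hq => simp only [add_smul, map_add, hp, hq]
  | monomial a c =>
    rw [𝓜.proj_monomial_smul, weightedHomogeneousComponent_monomial]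
    split_ifs with h
    · rw [← h, sub_sub_cancel, hm]
    · rw [← hm, 𝓜.proj_of_ne (by grind), smul_zero, zero_smul]

end Grading

open Grading

theorem IsGradedHom.isHomogeneous_ker {𝓜 : Grading K w M} {𝓝 : Grading K w N} {f : M →ₗ[R] N}
    (hf : IsGradedHom 𝓜 𝓝 f) : 𝓜.IsHomogeneous (LinearMap.ker f) := fun e m hm => by
  rw [LinearMap.mem_ker, hf, LinearMap.mem_ker.1 hm, map_zero]

/-- The grading of the kernel of a graded map. -/
noncomputable abbrev IsGradedHom.ker {𝓜 : Grading K w M} {𝓝 : Grading K w N} {f : M →ₗ[R] N}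
    (hf : IsGradedHom 𝓜 𝓝 f) : Grading K w (LinearMap.ker f) :=
  𝓜.restrict hf.isHomogeneous_ker

theorem IsGradedHom.restrict {𝓜 : Grading K w M} {𝓝 : Grading K w N} {f : M →ₗ[R] N}
    (hf : IsGradedHom 𝓜 𝓝 f) {L : Submodule R M} {L' : Submodule R N} (hL : 𝓜.IsHomogeneous L)
    (hL' : 𝓝.IsHomogeneous L') (h : ∀ m ∈ L, f m ∈ L') :
    IsGradedHom (𝓜.restrict hL) (𝓝.restrict hL') (f.restrict h) :=
  fun e m => Subtype.ext (hf e m)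

theorem IsGradedHom.symm {𝓜 : Grading K w M} {𝓝 : Grading K w N} {u : M ≃ₗ[R] N}
    (hu : IsGradedHom 𝓜 𝓝 (u : M →ₗ[R] N)) : IsGradedHom 𝓝 𝓜 (u.symm : N →ₗ[R] M) :=
  fun e y => u.symm_apply_eq.2 <| by
    rw [← LinearEquiv.coe_coe u, hu]
    simp

section Free

variable {ι : Type} {d : ι → ℤ}

theorem proj_free_single [DecidableEq ι] (d : ι → ℤ) (j : ι) :
    (free w d).proj (d j) (Pi.single j (1 : R)) = Pi.single j 1 := by
  funext i
  rw [free_proj_apply]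
  rcases eq_or_ne i j with rfl | h
  · rw [Pi.single_eq_same, sub_self]
    exact (isWeightedHomogeneous_one K w).weightedHomogeneousComponent_same
  · rw [Pi.single_eq_of_ne h, map_zero]

theorem isGradedHom_linearCombination [Fintype ι] {𝓜 : Grading K w M} {m : ι → M}
    (hm : ∀ j, 𝓜.proj (d j) (m j) = m j) :
    IsGradedHom (free w d) 𝓜 (Fintype.linearCombination R m) := fun e v => by
  simp only [Fintype.linearCombination_apply, map_sum, free_proj_apply,
    𝓜.proj_smul_of_proj_eq (hm _)]

theorem linearCombination_map_single [Fintype ι] [DecidableEq ι] (f : (ι → R) →ₗ[R] M) :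
    Fintype.linearCombination R (fun j => f (Pi.single j 1)) = f :=
  LinearMap.pi_ext' fun j => LinearMap.ext_ring (by simp)

theorem isGradedHom_of_map_homogeneous [Finite ι] {𝓜 : Grading K w M} {f : (ι → R) →ₗ[R] M}
    (h : ∀ e v, (free w d).proj e v = v → 𝓜.proj e (f v) = f v) :
    IsGradedHom (free w d) 𝓜 f := by
  classical
  have := Fintype.ofFinite ι
  rw [← linearCombination_map_single f]
  exact isGradedHom_linearCombination fun j => h _ _ (proj_free_single d j)

theorem IsGradedHom.exists_lift [Finite ι] {𝓜 : Grading K w M} {𝓝 : Grading K w N} {q : M →ₗ[R] N}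
    {f : (ι → R) →ₗ[R] N} (hf : IsGradedHom (free w d) 𝓝 f) (hq : IsGradedHom 𝓜 𝓝 q)
    (hs : Function.Surjective q) :
    ∃ g : (ι → R) →ₗ[R] M, IsGradedHom (free w d) 𝓜 g ∧ q ∘ₗ g = f := by
  classical
  have := Fintype.ofFinite ι
  choose m hm using fun j => hs (f (Pi.single j 1))
  refine ⟨Fintype.linearCombination R fun j => 𝓜.proj (d j) (m j),
    isGradedHom_linearCombination fun j => 𝓜.proj_self _ _, LinearMap.pi_ext' fun j =>
      LinearMap.ext_ring ?_⟩
  simp [hq (d j) (m j), hm, ← hf (d j), proj_free_single]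

end Free

/-- A graded surjection onto a graded module from a free module on homogeneous generators of
degrees `d`. -/
structure IsFreeCover {ι : Type} (d : ι → ℤ) (𝓜 : Grading K w M) (p : (ι → R) →ₗ[R] M) :
    Prop where
  graded : IsGradedHom (free w d) 𝓜 p
  surjective : Function.Surjective p

/-- The graded module `𝓜` has a partial free resolution `F_{k-1} → ⋯ → F_0 → M → 0` in which the
generators of `F_i` have degrees at most `r + i`. -/
def RegLE : ℕ → ∀ {M : Type} [AddCommGroup M] [Module R M], Grading K w M → ℤ → Prop
  | 0, _, _, _, _, _ => True
  | k + 1, M, _, _, 𝓜, r => ∃ (ι : Type) (_ : Finite ι) (d : ι → ℤ) (p : (ι → R) →ₗ[R] M)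
      (hp : IsFreeCover d 𝓜 p), (∀ j, d j ≤ r) ∧ RegLE k hp.graded.ker (r + 1)

section RegLE

variable {𝓜 : Grading K w M} {𝓝 : Grading K w N} {k : ℕ} {r s : ℤ}

theorem RegLE.mono (h : RegLE k 𝓜 r) (hrs : r ≤ s) : RegLE k 𝓜 s := by
  induction k generalizing M r s with
  | zero => trivial
  | succ k ih =>
    obtain ⟨ι, hι, d, p, hp, hd, hk⟩ := h
    exact ⟨ι, hι, d, p, hp, fun j => (hd j).trans hrs, ih hk (by omega)⟩

theorem RegLE.of_linearEquiv (h : RegLE k 𝓜 r) (u : M ≃ₗ[R] N)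
    (hu : IsGradedHom 𝓜 𝓝 (u : M →ₗ[R] N)) : RegLE k 𝓝 r := by
  induction k generalizing M N r with
  | zero => trivial
  | succ k ih =>
    obtain ⟨ι, hι, d, p, hp, hd, hk⟩ := h
    have hker : LinearMap.ker p = LinearMap.ker ((u : M →ₗ[R] N) ∘ₗ p) := by
      rw [LinearEquiv.ker_comp]
    have hup : IsFreeCover d 𝓝 ((u : M →ₗ[R] N) ∘ₗ p) :=
      ⟨hu.comp hp.graded, u.surjective.comp hp.surjective⟩
    exact ⟨ι, hι, d, _, hup, hd, ih hk (LinearEquiv.ofEq _ _ hker) fun _ _ => rfl⟩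

theorem RegLE.of_bijective (h : RegLE k 𝓝 r) {f : M →ₗ[R] N} (hf : IsGradedHom 𝓜 𝓝 f)
    (hbij : Function.Bijective f) : RegLE k 𝓜 r :=
  h.of_linearEquiv (LinearEquiv.ofBijective f hbij).symm (IsGradedHom.symm hf)

theorem RegLE.of_subsingleton [Subsingleton M] : RegLE k 𝓜 r := by
  induction k generalizing M r with
  | zero => trivial
  | succ k ih =>
    exact ⟨Empty, inferInstance, Empty.elim, 0, ⟨fun _ _ => Subsingleton.elim _ _,
      fun m => ⟨0, Subsingleton.elim _ _⟩⟩, fun j => j.elim, ih⟩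

theorem RegLE.free {ι : Type} [hι : Finite ι] {d : ι → ℤ} (hd : ∀ j, d j ≤ r) :
    RegLE k (Grading.free (K := K) w d) r := by
  cases k with
  | zero => trivial
  | succ k =>
    have : Subsingleton (LinearMap.ker (LinearMap.id : (ι → R) →ₗ[R] (ι → R))) := by
      rw [LinearMap.ker_id]; infer_instance
    exact ⟨ι, hι, d, LinearMap.id, ⟨fun _ _ => rfl, Function.surjective_id⟩, hd,
      RegLE.of_subsingleton⟩

theorem RegLE.of_cover_linearEquiv {ι : Type} [hι : Finite ι] {d : ι → ℤ} (hd : ∀ j, d j ≤ r)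
    (u : (ι → R) ≃ₗ[R] M) (hu : IsGradedHom (Grading.free w d) 𝓜 (u : (ι → R) →ₗ[R] M))
    {p : M →ₗ[R] N} (hp : IsGradedHom 𝓜 𝓝 p) (hs : Function.Surjective p)
    (h : RegLE k hp.ker (r + 1)) : RegLE (k + 1) 𝓝 r := by
  refine ⟨ι, hι, d, p ∘ₗ u, ⟨hp.comp hu, hs.comp u.surjective⟩, hd, ?_⟩
  have hmem (v : ι → R) (hv : v ∈ LinearMap.ker (p ∘ₗ (u : (ι → R) →ₗ[R] M))) :
      u v ∈ LinearMap.ker p := hv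
  refine h.of_bijective (hu.restrict _ _ hmem) ⟨fun x y hxy => ?_, fun ⟨m, hm⟩ => ?_⟩
  · exact Subtype.ext (u.injective (congrArg Subtype.val hxy))
  · obtain ⟨v, rfl⟩ := u.surjective m
    exact ⟨⟨v, hm⟩, rfl⟩

end RegLE

end Gradings

section Exact

variable {K : Type} [CommRing K] {σ : Type} {w : σ → ℤ} {A B C F G : Type}
  [AddCommGroup A] [Module (MvPolynomial σ K) A] [AddCommGroup B] [Module (MvPolynomial σ K) B]
  [AddCommGroup C] [Module (MvPolynomial σ K) C] [AddCommGroup F] [Module (MvPolynomial σ K) F]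
  [AddCommGroup G] [Module (MvPolynomial σ K) G] {𝓐 : Grading K w A} {𝓑 : Grading K w B}
  {𝓒 : Grading K w C} {𝓕 : Grading K w F} {𝓖 : Grading K w G} {k : ℕ} {r s : ℤ}

local notation "R" => MvPolynomial σ K

/-- A short exact sequence `0 → A → B → C → 0` of graded modules. -/
structure IsGradedSES (𝓐 : Grading K w A) (𝓑 : Grading K w B) (𝓒 : Grading K w C)
    (i : A →ₗ[R] B) (q : B →ₗ[R] C) : Prop where
  graded_left : IsGradedHom 𝓐 𝓑 i
  graded_right : IsGradedHom 𝓑 𝓒 q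
  injective : Function.Injective i
  surjective : Function.Surjective q
  exact : Function.Exact i q

theorem IsGradedSES.regLE_ker {i : A →ₗ[R] B} {q : B →ₗ[R] C} (h : IsGradedSES 𝓐 𝓑 𝓒 i q)
    (hA : RegLE k 𝓐 r) : RegLE k h.graded_right.ker r := by
  let u : A ≃ₗ[R] LinearMap.ker q := LinearEquiv.ofBijective
    (i.codRestrict (LinearMap.ker q) h.exact.apply_apply_eq_zero)
    ⟨fun a b hab => h.injective (congrArg Subtype.val hab), fun ⟨b, hb⟩ => by
      obtain ⟨a, rfl⟩ := (h.exact b).1 hb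
      exact ⟨a, rfl⟩⟩
  exact hA.of_linearEquiv u fun e a => Subtype.ext (h.graded_left e a)

theorem IsGradedSES.inr_fst (𝓐 : Grading K w A) (𝓑 : Grading K w B) :
    IsGradedSES 𝓑 (𝓐.prod 𝓑) 𝓐 (LinearMap.inr R A B) (LinearMap.fst R A B) where
  graded_left e _ := Prod.ext (map_zero (𝓐.proj e)).symm rfl
  graded_right _ _ := rfl
  injective := LinearMap.inr_injective
  surjective := LinearMap.fst_surjective
  exact := Function.Exact.inr_fst

theorem IsGradedSES.ker_comp {p : A →ₗ[R] B} {q : B →ₗ[R] C} (hp : IsGradedHom 𝓐 𝓑 p)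
    (hps : Function.Surjective p) (hq : IsGradedHom 𝓑 𝓒 q) :
    IsGradedSES hp.ker (hq.comp hp).ker hq.ker
      (Submodule.inclusion (LinearMap.ker_le_ker_comp p q)) (p.restrict fun _ hv => hv) where
  graded_left _ _ := rfl
  graded_right := hp.restrict _ _ _
  injective := Submodule.inclusion_injective _
  surjective := fun ⟨b, hb⟩ => by
    obtain ⟨a, rfl⟩ := hps b
    exact ⟨⟨a, hb⟩, rfl⟩
  exact := fun ⟨a, _⟩ => by
    refine ⟨fun h => ⟨⟨a, congrArg Subtype.val h⟩, rfl⟩, ?_⟩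
    rintro ⟨x, hx⟩
    obtain rfl : x.1 = a := congrArg Subtype.val hx
    exact Subtype.ext x.2

theorem IsGradedHom.coprod {f : F →ₗ[R] B} {g : G →ₗ[R] B} (hf : IsGradedHom 𝓕 𝓑 f)
    (hg : IsGradedHom 𝓖 𝓑 g) : IsGradedHom (𝓕.prod 𝓖) 𝓑 (f.coprod g) := fun e v => by
  rw [LinearMap.coprod_apply, LinearMap.coprod_apply, map_add, ← hf, ← hg]
  rfl

/-- The cover of the middle term of a short exact sequence in the horseshoe lemma. -/
theorem IsGradedSES.surjective_coprod {i : A →ₗ[R] B} {q : B →ₗ[R] C}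
    (h : IsGradedSES 𝓐 𝓑 𝓒 i q) {p : F →ₗ[R] A} (hp : Function.Surjective p) {t : G →ₗ[R] B}
    (ht : Function.Surjective (q ∘ₗ t)) : Function.Surjective ((i ∘ₗ p).coprod t) := fun b => by
  obtain ⟨y, hy⟩ := ht (q b)
  obtain ⟨a, ha⟩ := (h.exact (b - t y)).1 (by rw [map_sub, ← hy, LinearMap.comp_apply, sub_self])
  obtain ⟨x, rfl⟩ := hp a
  exact ⟨(x, y), by simp [ha]⟩

/-- The syzygies in the horseshoe lemma. -/
theorem IsGradedSES.ker_coprod {i : A →ₗ[R] B} {q : B →ₗ[R] C} (h : IsGradedSES 𝓐 𝓑 𝓒 i q)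
    {p : F →ₗ[R] A} (hp : IsGradedHom 𝓕 𝓐 p) (hps : Function.Surjective p) {t : G →ₗ[R] B}
    (ht : IsGradedHom 𝓖 𝓑 t) :
    IsGradedSES hp.ker ((h.graded_left.comp hp).coprod ht).ker (h.graded_right.comp ht).ker
      ((LinearMap.inl R F G).restrict fun x hx => by simp_all)
      ((LinearMap.snd R F G).restrict fun x hx => by
        simpa [h.exact.apply_apply_eq_zero] using congrArg q hx) where
  graded_left e _ := Subtype.ext (Prod.ext rfl (map_zero (𝓖.proj e)).symm)
  graded_right _ _ := rfl
  injective x y hxy := Subtype.ext (congrArg (fun v => v.1.1) hxy)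
  surjective := fun ⟨y, hy⟩ => by
    obtain ⟨a, ha⟩ := (h.exact (t y)).1 hy
    obtain ⟨x, rfl⟩ := hps a
    exact ⟨⟨(-x, y), by simp [ha]⟩, rfl⟩
  exact := fun ⟨⟨x, y⟩, hxy⟩ => by
    refine ⟨fun hy => ?_, ?_⟩
    · obtain rfl : y = 0 := congrArg Subtype.val hy
      refine ⟨⟨x, h.injective ?_⟩, rfl⟩
      simpa using hxy
    · rintro ⟨z, hz⟩
      exact Subtype.ext (congrArg (fun v => v.1.2) hz).symm

theorem RegLE.horseshoe {i : A →ₗ[R] B} {q : B →ₗ[R] C} (h : IsGradedSES 𝓐 𝓑 𝓒 i q)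
    (hA : RegLE k 𝓐 r) (hC : RegLE k 𝓒 r) : RegLE k 𝓑 r := by
  induction k generalizing A B C r with
  | zero => trivial
  | succ k ih =>
    obtain ⟨ι, hι, d, p, hp, hd, hk⟩ := hA
    obtain ⟨κ, hκ, d', p', hp', hd', hk'⟩ := hC
    obtain ⟨t, ht, rfl⟩ := hp'.graded.exists_lift h.graded_right h.surjective
    refine RegLE.of_cover_linearEquiv (d := Sum.elim d d') (by simp [hd, hd'])
      (LinearEquiv.sumArrowLequivProdArrow ι κ R R) (fun _ _ => rfl)
      ((h.graded_left.comp hp.graded).coprod ht) (h.surjective_coprod hp.surjective hp'.surjective)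
      (ih (h.ker_coprod hp.graded hp.surjective ht) hk hk')

theorem RegLE.mappingCone {i : A →ₗ[R] B} {q : B →ₗ[R] C} (h : IsGradedSES 𝓐 𝓑 𝓒 i q)
    (hB : RegLE (k + 1) 𝓑 r) (hA : RegLE k 𝓐 (r + 1)) : RegLE (k + 1) 𝓒 r := by
  obtain ⟨ι, hι, d, p, hp, hd, hk⟩ := hB
  exact ⟨ι, hι, d, q ∘ₗ p, ⟨h.graded_right.comp hp.graded, h.surjective.comp hp.surjective⟩, hd,
    RegLE.horseshoe (IsGradedSES.ker_comp hp.graded hp.surjective h.graded_right) hk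
      (h.regLE_ker hA)⟩

/-- The pullback of `p : F → C` and `p' : G → C` is `ker p × G`, because `p'` lifts to `F`. -/
theorem IsGradedSES.schanuel {p : F →ₗ[R] C} (hp : IsGradedHom 𝓕 𝓒 p) {t : G →ₗ[R] F}
    (ht : IsGradedHom 𝓖 𝓕 t) (hs : Function.Surjective (p ∘ₗ t)) :
    IsGradedSES (hp.comp ht).ker (hp.ker.prod 𝓖) 𝓕
      ((-t.restrict fun _ hv => hv).prod (LinearMap.ker (p ∘ₗ t)).subtype)
      ((LinearMap.ker p).subtype.coprod t) where
  graded_left e z := Prod.ext (Subtype.ext (by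
    change -t (𝓖.proj e z) = 𝓕.proj e (-t z)
    rw [ht, map_neg])) rfl
  graded_right := IsGradedHom.coprod (fun _ _ => rfl) ht
  injective x y hxy := Subtype.ext (congrArg Prod.snd hxy)
  surjective f := by
    obtain ⟨g, hg⟩ := hs (p f)
    exact ⟨(⟨f - t g, by simp_all⟩, g), sub_add_cancel f (t g)⟩
  exact := fun ⟨⟨z, hz⟩, g⟩ => by
    refine ⟨fun h => ?_, ?_⟩
    · obtain rfl : z = -t g := eq_neg_of_add_eq_zero_left h
      exact ⟨⟨g, by simpa using hz⟩, rfl⟩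
    · rintro ⟨x, hx⟩
      obtain rfl : x.1 = g := congrArg Prod.snd hx
      obtain rfl : -t x.1 = z := congrArg (fun v => v.1.1) hx
      exact neg_add_cancel _

/-- By Schanuel's lemma the first syzygy module may be computed from any free cover. -/
theorem RegLE.ker {ι : Type} [Finite ι] {d : ι → ℤ} {p : (ι → R) →ₗ[R] C}
    (hC : RegLE (k + 1) 𝓒 r) (hp : IsFreeCover d 𝓒 p) (hd : ∀ j, d j ≤ r) :
    RegLE k hp.graded.ker (r + 1) := by
  cases k with
  | zero => trivial
  | succ k =>
    obtain ⟨κ, hκ, d', p', hp', hd', hk⟩ := hC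
    obtain ⟨t, ht, rfl⟩ := hp'.graded.exists_lift hp.graded hp.surjective
    have hF : RegLE (k + 1) (Grading.free (K := K) w d) (r + 1) :=
      RegLE.free fun j => (hd j).trans (by omega)
    have hG : RegLE k (Grading.free (K := K) w d') (r + 1 + 1) :=
      RegLE.free fun j => (hd' j).trans (by omega)
    exact RegLE.mappingCone (IsGradedSES.inr_fst _ _)
      (RegLE.horseshoe (IsGradedSES.schanuel hp.graded ht hp'.surjective) hk hF) hG

theorem RegLE.shift (h : RegLE k 𝓐 r) (s : ℤ) : RegLE k (𝓐.shift s) (r - s) := by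
  induction k generalizing A r with
  | zero => trivial
  | succ k ih =>
    obtain ⟨ι, hι, d, p, hp, hd, hk⟩ := h
    have hfree : ((Grading.free w d).shift s : Grading K w (ι → R)).proj =
        (Grading.free w fun j => d j - s).proj := by
      ext1 e
      ext v j : 3
      simp only [Grading.shift, Grading.free_proj_apply]
      rw [sub_sub_eq_add_sub]
    have hps : IsFreeCover (fun j => d j - s) (𝓐.shift s) p :=
      ⟨fun e v => by rw [← hfree]; exact hp.graded (e + s) v, hp.surjective⟩
    refine ⟨ι, hι, fun j => d j - s, p, hps, fun j => sub_le_sub_right (hd j) s, ?_⟩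
    rw [sub_add_eq_add_sub]
    exact (ih hk).of_linearEquiv (LinearEquiv.refl R _) fun e v =>
      Subtype.ext (congrFun (congrArg DFunLike.coe (congrFun hfree e)) v.1)

end Exact

/-! ### Truncation in a variable -/

section VariableDegree

variable {K σ : Type} [CommRing K] [DecidableEq σ] {x : σ}

theorem weightedHomogeneousComponent_single_of_neg {e : ℤ} (he : e < 0) (p : MvPolynomial σ K) :
    weightedHomogeneousComponent (Pi.single x (1 : ℤ)) e p = 0 := by
  ext a
  rw [coeff_weightedHomogeneousComponent, Finsupp.weight_single_index, if_neg (by simp; omega),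
    coeff_zero]

theorem eventually_sum_weightedHomogeneousComponent_single (α : ℕ) (p : MvPolynomial σ K) :
    ∀ᶠ N : ℕ in Filter.atTop, ∑ a ∈ Finset.range N,
      weightedHomogeneousComponent (Pi.single x (1 : ℤ)) (a - α) p = p := by
  induction p using MvPolynomial.induction_on' with
  | add p q hp hq =>
    filter_upwards [hp, hq] with N hpN hqN
    simp only [map_add, Finset.sum_add_distrib, hpN, hqN]
  | monomial a c =>
    filter_upwards [Filter.eventually_gt_atTop (a x + α)] with N hN
    simp only [weightedHomogeneousComponent_monomial, Finsupp.weight_single_index, nsmul_one,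
      sub_eq_iff_eq_add]
    norm_cast
    rw [Finset.sum_ite_eq', if_pos (Finset.mem_range.2 hN)]

theorem X_dvd_iff_weightedHomogeneousComponent_single_eq_zero (p : MvPolynomial σ K) :
    X x ∣ p ↔ weightedHomogeneousComponent (Pi.single x (1 : ℤ)) 0 p = 0 := by
  rw [X_dvd_iff_modMonomial_eq_zero]
  congr! 1
  ext a
  rw [coeff_weightedHomogeneousComponent, Finsupp.weight_single_index]
  by_cases h : Finsupp.single x 1 ≤ a
  · rw [coeff_modMonomial_of_le _ h, if_neg]
    have := Finsupp.single_le_iff.1 h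
    simp; omega
  · rw [coeff_modMonomial_of_not_le _ h, if_pos]
    have := mt Finsupp.single_le_iff.2 h
    simp; omega

end VariableDegree

section PosPartFree

variable {K σ ι : Type} [CommRing K] {x : σ} {w : σ → ℤ} {d : ι → ℤ} {α : ι → ℕ}

/-- The inclusion of the part of positive `x`-degree into a free module whose `j`-th basis vector
has `x`-degree `α j`: that part is again free, the basis vectors of `x`-degree zero being
multiplied by `x`. -/
noncomputable def posPartFree (K : Type) [CommRing K] (x : σ) (α : ι → ℕ) :
    (ι → MvPolynomial σ K) →ₗ[MvPolynomial σ K] (ι → MvPolynomial σ K) :=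
  LinearMap.pi fun j =>
    (LinearMap.mulLeft _ (if α j = 0 then X x else 1)).comp (LinearMap.proj j)

theorem posPartFree_apply (v : ι → MvPolynomial σ K) (j : ι) :
    posPartFree K x α v j = (if α j = 0 then X x else 1) * v j := rfl

theorem posPartFree_injective : Function.Injective (posPartFree K x α) := fun u v huv => by
  funext j
  have := congrFun huv j
  simp only [posPartFree_apply] at this
  split_ifs at this
  · exact X_mul_cancel_left_iff.1 this
  · simpa using this

theorem isGradedHom_posPartFree :
    IsGradedHom (Grading.free w fun j => d j + if α j = 0 then w x else 0) (Grading.free w d)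
      (posPartFree K x α) := fun e v => by
  funext j
  simp only [posPartFree_apply, Grading.free_proj_apply]
  split_ifs
  · rw [X, weightedHomogeneousComponent_monomial_mul, Finsupp.weight_single, one_smul, sub_sub]
  · rw [one_mul, one_mul, add_zero]

end PosPartFree

section Truncation

variable {K : Type} [CommRing K] {σ : Type} [DecidableEq σ] {x : σ} {w : σ → ℤ} {M N : Type}
  [AddCommGroup M] [Module (MvPolynomial σ K) M] [AddCommGroup N] [Module (MvPolynomial σ K) N]
  {𝓜 : Grading K w M} {𝓜' : Grading K (Pi.single x 1) M} {𝓝 : Grading K w N}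
  {𝓝' : Grading K (Pi.single x 1) N}

local notation "R" => MvPolynomial σ K

/-- The grading `𝓜'` by the degree in the single variable `x` commutes with `𝓜`, lives in degrees
`≥ 0`, and its components exhaust the module. -/
structure IsBigrading (𝓜 : Grading K w M) (𝓜' : Grading K (Pi.single x 1) M) : Prop where
  comm : ∀ d e m, 𝓜'.proj d (𝓜.proj e m) = 𝓜.proj e (𝓜'.proj d m)
  eventually_sum_proj : ∀ m, ∀ᶠ N : ℕ in Filter.atTop, ∑ a ∈ Finset.range N, 𝓜'.proj a m = m

namespace IsBigrading

theorem proj_of_neg (h : IsBigrading 𝓜 𝓜') {e : ℤ} (he : e < 0) (m : M) : 𝓜'.proj e m = 0 := by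
  obtain ⟨N, hN⟩ := (h.eventually_sum_proj m).exists
  rw [← hN, map_sum]
  exact Finset.sum_eq_zero fun a _ => 𝓜'.proj_of_ne (by omega) m

theorem of_surjective (h : IsBigrading 𝓜 𝓜') {f : M →ₗ[R] N} (hf : IsGradedHom 𝓜 𝓝 f)
    (hf' : IsGradedHom 𝓜' 𝓝' f) (hs : Function.Surjective f) : IsBigrading 𝓝 𝓝' where
  comm d e := hs.forall.2 fun m => by rw [← hf, ← hf', h.comm, hf, hf']
  eventually_sum_proj := hs.forall.2 fun m => by
    filter_upwards [h.eventually_sum_proj m] with N hN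
    simp only [← hf' _ m, ← map_sum, hN]

theorem ker (h : IsBigrading 𝓜 𝓜') {f : M →ₗ[R] N} (hf : IsGradedHom 𝓜 𝓝 f)
    (hf' : IsGradedHom 𝓜' 𝓝' f) : IsBigrading hf.ker hf'.ker where
  comm d e m := Subtype.ext (h.comm d e m)
  eventually_sum_proj m := by
    filter_upwards [h.eventually_sum_proj m] with N hN
    exact Subtype.ext ((map_sum (LinearMap.ker f).subtype _ _).trans hN)

theorem ring : IsBigrading (Grading.ring K w) (Grading.ring K (Pi.single x 1)) where
  comm := weightedHomogeneousComponent_comm _ _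
  eventually_sum_proj p := by
    have := eventually_sum_weightedHomogeneousComponent_single (x := x) 0 p
    simp only [Nat.cast_zero, sub_zero] at this
    exact this

theorem free {ι : Type} [Finite ι] (d : ι → ℤ) (α : ι → ℕ) :
    IsBigrading (Grading.free (K := K) w d) (Grading.free (Pi.single x 1) fun j => (α j : ℤ)) where
  comm _ _ v := funext fun j => weightedHomogeneousComponent_comm _ _ _ _ (v j)
  eventually_sum_proj v := by
    filter_upwards [Filter.eventually_all.2 fun j =>
      eventually_sum_weightedHomogeneousComponent_single (x := x) (α j) (v j)] with N hN
    exact funext fun j => (Finset.sum_apply j _ _).trans (hN j)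

/-- The submodule of elements of positive degree in `x`. -/
def posPart (h : IsBigrading 𝓜 𝓜') : Submodule R M where
  carrier := {m | 𝓜'.proj 0 m = 0}
  zero_mem' := map_zero _
  add_mem' := fun {u v} hu hv => ((𝓜'.proj 0).map_add u v).trans (by rw [hu, hv, add_zero])
  smul_mem' := fun p m (hm : 𝓜'.proj 0 m = 0) => by
    change 𝓜'.proj 0 (p • m) = 0
    induction p using MvPolynomial.induction_on' with
    | add p q hp hq => rw [add_smul, map_add, hp, hq, add_zero]
    | monomial a c =>
      rw [𝓜'.proj_monomial_smul, Finsupp.weight_single_index, nsmul_one, zero_sub]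
      rcases (a x).eq_zero_or_pos with h0 | h0
      · rw [h0, Nat.cast_zero, neg_zero, hm, smul_zero]
      · rw [h.proj_of_neg (by omega), smul_zero]

theorem mem_posPart (h : IsBigrading 𝓜 𝓜') {m : M} : m ∈ h.posPart ↔ 𝓜'.proj 0 m = 0 := Iff.rfl

theorem isHomogeneous_posPart (h : IsBigrading 𝓜 𝓜') : 𝓜.IsHomogeneous h.posPart :=
  fun e m hm => by rw [h.mem_posPart, h.comm, h.mem_posPart.1 hm, map_zero]

theorem exists_freeCover (h : IsBigrading 𝓜 𝓜') {k : ℕ} {r : ℤ} (hM : RegLE (k + 1) 𝓜 r) :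
    ∃ (ι : Type) (_ : Finite ι) (d : ι → ℤ) (α : ι → ℕ) (p : (ι → R) →ₗ[R] M),
      IsFreeCover d 𝓜 p ∧ IsFreeCover (fun j => (α j : ℤ)) 𝓜' p ∧ ∀ j, d j ≤ r := by
  classical
  obtain ⟨ι, _, d, p, hp, hd, -⟩ := hM
  have := Fintype.ofFinite ι
  let m (j : ι) : M := p (Pi.single j 1)
  have hm (j : ι) : 𝓜.proj (d j) (m j) = m j := by rw [← hp.graded, proj_free_single]
  obtain ⟨N, hN⟩ := (Filter.eventually_all.2 fun j => h.eventually_sum_proj (m j)).exists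
  let m' (j : ι × Fin N) : M := 𝓜'.proj (j.2 : ℕ) (m j.1)
  have hs : Function.Surjective (Fintype.linearCombination R m') := fun y => by
    obtain ⟨v, rfl⟩ := hp.surjective y
    refine ⟨fun j => v j.1, ?_⟩
    rw [Fintype.linearCombination_apply, Fintype.sum_prod_type, ← linearCombination_map_single p,
      Fintype.linearCombination_apply]
    refine Finset.sum_congr rfl fun j _ => ?_
    change ∑ a : Fin N, v j • 𝓜'.proj (a : ℕ) (m j) = v j • m j
    rw [← Finset.smul_sum, Fin.sum_univ_eq_sum_range (fun a : ℕ => 𝓜'.proj a (m j)) N, hN j]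
  exact ⟨ι × Fin N, inferInstance, fun j => d j.1, fun j => j.2, Fintype.linearCombination R m',
    ⟨isGradedHom_linearCombination fun j => by rw [← h.comm, hm], hs⟩,
    ⟨isGradedHom_linearCombination fun j => 𝓜'.proj_self _ _, hs⟩, fun j => hd j.1⟩

end IsBigrading

theorem exists_posPartFree_eq_iff {ι : Type} {α : ι → ℕ} (v : ι → R) :
    (∃ u, posPartFree K x α u = v) ↔
      (Grading.free (Pi.single x 1) fun j => (α j : ℤ)).proj 0 v = 0 := by
  simp only [funext_iff, posPartFree_apply, Grading.free_proj_apply, Pi.zero_apply]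
  rw [← Classical.skolem (p := fun j q => (if α j = 0 then X x else 1) * q = v j)]
  refine forall_congr' fun j => ?_
  rcases (α j).eq_zero_or_pos with h | h
  · rw [h, Nat.cast_zero, sub_zero, ← X_dvd_iff_weightedHomogeneousComponent_single_eq_zero]
    simp only [if_true, dvd_def, eq_comm]
  · rw [weightedHomogeneousComponent_single_of_neg (by omega)]
    simp [h.ne']

theorem IsBigrading.isFreeCover_posPart {ι : Type} [Finite ι] {d : ι → ℤ} {α : ι → ℕ}
    (h : IsBigrading 𝓜 𝓜') {p : (ι → R) →ₗ[R] M} (hp : IsFreeCover d 𝓜 p)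
    (hp' : IsFreeCover (fun j => (α j : ℤ)) 𝓜' p) :
    IsFreeCover (fun j => d j + if α j = 0 then w x else 0) (𝓜.restrict h.isHomogeneous_posPart)
      ((p ∘ₗ posPartFree K x α).codRestrict h.posPart fun v => by
        rw [h.mem_posPart, LinearMap.comp_apply, ← hp'.graded,
          (exists_posPartFree_eq_iff _).1 ⟨v, rfl⟩, map_zero]) where
  graded e v := Subtype.ext (hp.graded.comp isGradedHom_posPartFree e v)
  surjective := fun ⟨y, hy⟩ => by
    obtain ⟨v, rfl⟩ := hp.surjective y
    rw [h.mem_posPart, ← hp'.graded] at hy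
    obtain ⟨u, hu⟩ := (exists_posPartFree_eq_iff (x := x) (α := α) _).2
      (show (Grading.free _ _).proj 0 (v - (Grading.free _ _).proj 0 v) = 0 by
        rw [map_sub, Grading.proj_self, sub_self])
    exact ⟨u, Subtype.ext (by simp [hu, hy])⟩

theorem RegLE.posPart {k : ℕ} {r : ℤ} (h : IsBigrading 𝓜 𝓜') (hx : 0 ≤ w x) (hM : RegLE k 𝓜 r) :
    RegLE k (𝓜.restrict h.isHomogeneous_posPart) (r + w x) := by
  induction k generalizing M r with
  | zero => trivial
  | succ k ih =>
    obtain ⟨ι, hι, d, α, p, hp, hp', hd⟩ := h.exists_freeCover hM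
    have hker : IsBigrading hp.graded.ker hp'.graded.ker :=
      (IsBigrading.free d α).ker hp.graded hp'.graded
    have hP := h.isFreeCover_posPart hp hp'
    refine ⟨ι, hι, _, _, hP,
      fun j => add_le_add (hd j) (by split_ifs <;> simp [hx]), ?_⟩
    rw [add_right_comm]
    refine (ih hker (hM.ker hp hd)).of_bijective
      (f := LinearMap.codRestrict hker.posPart ((posPartFree K x α).restrict fun v hv =>
        congrArg Subtype.val (LinearMap.mem_ker.1 hv)) fun v =>
          Subtype.ext ((exists_posPartFree_eq_iff _).1 ⟨v.1, rfl⟩)) ?_ ⟨fun u v huv => ?_, ?_⟩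
    · exact fun e v => Subtype.ext (Subtype.ext (isGradedHom_posPartFree e v.1))
    · exact Subtype.ext (posPartFree_injective (congrArg (fun z => z.1.1) huv))
    · rintro ⟨⟨v, hv⟩, hv'⟩
      obtain ⟨u, rfl⟩ := (exists_posPartFree_eq_iff _).2 (congrArg Subtype.val hv')
      exact ⟨⟨u, Subtype.ext hv⟩, rfl⟩

end Truncation

/-! ### Monomial ideals -/

section Multihomogeneous

variable {K σ : Type} [CommRing K] {I J : Ideal (MvPolynomial σ K)} {w : σ → ℤ}

/-- Ideals that are homogeneous however the variables are weighted. -/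
def IsMultihomogeneous (I : Ideal (MvPolynomial σ K)) : Prop :=
  ∀ w : σ → ℤ, (Grading.ring K w).IsHomogeneous I

theorem isMultihomogeneous_span_monomial (S : Set (σ →₀ ℕ)) :
    IsMultihomogeneous (Ideal.span ((fun s => monomial s (1 : K)) '' S)) := by
  classical
  intro w e p hp
  rw [mem_ideal_span_monomial_image] at hp ⊢
  refine fun a ha => hp a (mem_support_iff.2 fun h => mem_support_iff.1 ha ?_)
  exact (coeff_weightedHomogeneousComponent e p a).trans (by rw [h, ite_self])

namespace IsMultihomogeneous

theorem colon_monomial (hI : IsMultihomogeneous I) (b : σ →₀ ℕ) :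
    IsMultihomogeneous (I.colon (Ideal.span {monomial b (1 : K)})) := by
  intro w e p hp
  rw [Ideal.mem_colon_span_singleton, mul_comm] at hp ⊢
  have := hI w (e + Finsupp.weight w b) _ hp
  rwa [← smul_eq_mul, (Grading.ring K w).proj_monomial_smul, add_sub_cancel_right] at this

theorem add (hI : IsMultihomogeneous I) (hJ : IsMultihomogeneous J) :
    IsMultihomogeneous (I + J) := by
  intro w e p hp
  obtain ⟨u, hu, v, hv, rfl⟩ := Submodule.mem_sup.1 hp
  rw [map_add]
  exact add_mem (Ideal.mem_sup_left (hI w e u hu)) (Ideal.mem_sup_right (hJ w e v hv))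

theorem add_span_monomial (hI : IsMultihomogeneous I) (b : σ →₀ ℕ) :
    IsMultihomogeneous (I + Ideal.span {monomial b (1 : K)}) :=
  hI.add (by simpa using isMultihomogeneous_span_monomial (K := K) {b})

/-- The grading of `R ⧸ I` by the weights `w` of the variables. -/
noncomputable abbrev grading (hI : IsMultihomogeneous I) (w : σ → ℤ) :
    Grading K w (MvPolynomial σ K ⧸ I) :=
  (Grading.ring K w).quotient (hI w)

theorem isBigrading [DecidableEq σ] {x : σ} (hI : IsMultihomogeneous I) :
    IsBigrading (hI.grading w) (hI.grading (Pi.single x 1)) :=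
  IsBigrading.ring.of_surjective ((Grading.ring K w).isGradedHom_mkQ (hI w))
    ((Grading.ring K _).isGradedHom_mkQ (hI _)) I.mkQ_surjective

theorem proj_colonMul (hI : IsMultihomogeneous I) (b : σ →₀ ℕ) (e : ℤ)
    (y : MvPolynomial σ K ⧸ I.colon (Ideal.span {monomial b (1 : K)})) :
    (hI.grading w).proj e (colonMul I (monomial b 1) y) =
      colonMul I (monomial b 1)
        (((hI.colon_monomial b).grading w).proj (e - Finsupp.weight w b) y) := by
  obtain ⟨p, rfl⟩ := Ideal.Quotient.mk_surjective y
  refine congrArg (Ideal.Quotient.mk I) ?_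
  change weightedHomogeneousComponent w e (p * monomial b 1) =
    weightedHomogeneousComponent w (e - Finsupp.weight w b) p * monomial b 1
  rw [mul_comm, weightedHomogeneousComponent_monomial_mul, mul_comm]

theorem isGradedSES_colonMul (hI : IsMultihomogeneous I) (b : σ →₀ ℕ) :
    IsGradedSES (((hI.colon_monomial b).grading w).shift (-Finsupp.weight w b)) (hI.grading w)
      ((hI.add_span_monomial b).grading w) (colonMul I (monomial b 1))
      (Submodule.factor le_sup_left) where
  graded_left e y := (hI.proj_colonMul b e y).symm
  graded_right _ := I.mkQ_surjective.forall.2 fun _ => rfl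
  injective := colonMul_injective I _
  surjective := Submodule.factor_surjective _
  exact := exact_colonMul_factor I _

theorem mem_posPart_iff [DecidableEq σ] {x : σ} (hI : IsMultihomogeneous I)
    (y : MvPolynomial σ K ⧸ I) : y ∈ (hI.isBigrading (w := w) (x := x)).posPart ↔
      ∃ z, colonMul I (monomial (Finsupp.single x 1) 1) z = y := by
  rw [IsBigrading.mem_posPart]
  constructor
  · intro hy
    obtain ⟨p, rfl⟩ := Ideal.Quotient.mk_surjective y
    set p₀ := weightedHomogeneousComponent (Pi.single x (1 : ℤ)) 0 p
    obtain ⟨q, hq⟩ : X x ∣ p - p₀ := by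
      rw [X_dvd_iff_weightedHomogeneousComponent_single_eq_zero, map_sub,
        weightedHomogeneousComponent_self, sub_self]
    have hp₀ : Ideal.Quotient.mk I p₀ = 0 := hy
    refine ⟨Ideal.Quotient.mk _ q, ?_⟩
    change Ideal.Quotient.mk I (q * X x) = _
    rw [mul_comm, ← hq, map_sub, hp₀, sub_zero]
  · rintro ⟨z, rfl⟩
    rw [proj_colonMul, IsBigrading.proj_of_neg ((hI.colon_monomial _).isBigrading (w := w)),
      map_zero]
    simp [Finsupp.weight_single_index]

theorem regLE_colon_X {x : σ} (hI : IsMultihomogeneous I) (hx : 0 ≤ w x)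
    {k : ℕ} {r : ℤ} (h : RegLE k (hI.grading w) r) :
    RegLE k ((hI.colon_monomial (Finsupp.single x 1)).grading w) r := by
  classical
  have hpos := (h.posPart (hI.isBigrading (x := x)) hx).shift (w x)
  rw [add_sub_cancel_right] at hpos
  refine hpos.of_bijective (f := (colonMul I (monomial (Finsupp.single x 1) 1)).codRestrict _
    fun z => (hI.mem_posPart_iff _).2 ⟨z, rfl⟩) ?_ ⟨fun u v huv => ?_, ?_⟩
  · intro e y
    refine Subtype.ext ((hI.proj_colonMul _ (e + w x) y).trans ?_).symm
    rw [Finsupp.weight_single, one_smul, add_sub_cancel_right]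
    rfl
  · exact colonMul_injective I _ (congrArg Subtype.val huv)
  · rintro ⟨y, hy⟩
    obtain ⟨z, rfl⟩ := (hI.mem_posPart_iff y).1 hy
    exact ⟨z, rfl⟩

theorem regLE_add_span_monomial (hI : IsMultihomogeneous I) (b : σ →₀ ℕ) {k : ℕ} {r s : ℤ}
    (h : RegLE (k + 1) (hI.grading w) s) (hb : RegLE k ((hI.colon_monomial b).grading w) r)
    (hrs : r + Finsupp.weight w b ≤ s + 1) :
    RegLE (k + 1) ((hI.add_span_monomial b).grading w) s :=
  RegLE.mappingCone (hI.isGradedSES_colonMul b) h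
    ((hb.shift _).mono (by rwa [sub_neg_eq_add]))

end IsMultihomogeneous

end Multihomogeneous

/-! ### Graded free resolutions -/

section Resolutions

variable {K σ : Type} [Field K] {w : σ → ℤ} {A B : Type} [AddCommGroup A]
  [Module (MvPolynomial σ K) A] [AddCommGroup B] [Module (MvPolynomial σ K) B]
  {𝓐 : Grading K w A} {𝓑 : Grading K w B} {r : ℤ}

local notation "R" => MvPolynomial σ K

theorem weight_one_eq_degree {S : Type*} [AddCommMonoidWithOne S] (a : σ →₀ ℕ) :
    Finsupp.weight (1 : σ → S) a = a.degree := by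
  simp [Finsupp.weight_apply, Finsupp.degree_apply, Finsupp.sum]

theorem homogComp_iff (e : ℤ) (p : R) :
    HomogComp K σ e p ↔ weightedHomogeneousComponent (1 : σ → ℤ) e p = p := by
  have hmem : weightedHomogeneousComponent (1 : σ → ℤ) e p = p ↔
      ∀ a, coeff a p ≠ 0 → (a.degree : ℤ) = e := by
    simp only [← weight_one_eq_degree]
    exact ⟨fun h => h ▸ weightedHomogeneousComponent_isWeightedHomogeneous e p,
      fun h => IsWeightedHomogeneous.weightedHomogeneousComponent_same h⟩
  rw [hmem, HomogComp]
  split_ifs with he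
  · simp only [mem_homogeneousSubmodule, IsHomogeneous, IsWeightedHomogeneous]
    refine forall₂_congr fun a _ => ?_
    rw [weight_one_eq_degree, Nat.cast_id]
    omega
  · refine ⟨fun h a ha => absurd (by rw [h, coeff_zero]) ha, fun h => ?_⟩
    ext a
    by_contra ha
    exact he (h a ha ▸ Int.natCast_nonneg _)

theorem isHomogVec_iff {m : ℕ} (d : Fin m → ℤ) (e : ℤ) (v : Fin m → R) :
    IsHomogVec K σ d e v ↔ (Grading.free 1 d).proj e v = v := by
  simp only [IsHomogVec, homogComp_iff, funext_iff, Grading.free_proj_apply]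

theorem mem_quotComp_iff {I : Ideal R} (hI : IsMultihomogeneous I) (e : ℤ) (y : R ⧸ I) :
    y ∈ QuotComp K σ I e ↔ (hI.grading 1).proj e y = y := by
  have hmem : y ∈ QuotComp K σ I e ↔ ∃ p, HomogComp K σ e p ∧ Ideal.Quotient.mk I p = y := by
    unfold QuotComp HomogComp
    split_ifs
    · rfl
    · simp [eq_comm]
  rw [hmem]
  constructor
  · rintro ⟨p, hp, rfl⟩
    exact congrArg (Ideal.Quotient.mk I) ((homogComp_iff e p).1 hp)
  · intro hy
    obtain ⟨p, rfl⟩ := Ideal.Quotient.mk_surjective y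
    exact ⟨_, (homogComp_iff e _).2 (weightedHomogeneousComponent_self 1 e p), hy⟩

theorem RegLE.ker_of_exact {k : ℕ} {ι : Type} [Finite ι] {d : ι → ℤ} {f : (ι → R) →ₗ[R] A}
    {g : A →ₗ[R] B} (hf : IsGradedHom (Grading.free w d) 𝓐 f) (hg : IsGradedHom 𝓐 𝓑 g)
    (hfg : Function.Exact f g) (hd : ∀ j, d j ≤ r) (h : RegLE k hf.ker (r + 1)) :
    RegLE (k + 1) hg.ker r := by
  have hcover : IsFreeCover d hg.ker
      (f.codRestrict (LinearMap.ker g) fun v => hfg.apply_apply_eq_zero v) :=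
    ⟨fun e v => Subtype.ext (hf e v), fun ⟨y, hy⟩ =>
      let ⟨v, hv⟩ := (hfg y).1 hy
      ⟨v, Subtype.ext hv⟩⟩
  refine ⟨ι, inferInstance, d, _, hcover, hd, ?_⟩
  exact h.of_linearEquiv (LinearEquiv.ofEq _ _ (LinearMap.ker_codRestrict _ _ _).symm)
    fun _ _ => rfl

theorem regLE_of_resBound {I : Ideal R} (hI : IsMultihomogeneous I) (h : ResBound K σ I r)
    (k : ℕ) : RegLE k (hI.grading 1) r := by
  obtain ⟨F, hF⟩ := h
  have hd (i : ℕ) (j) : F.dg i j ≤ r + i := sub_le_iff_le_add.1 (hF i j)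
  have hmap (i : ℕ) :
      IsGradedHom (Grading.free 1 (F.dg (i + 1))) (Grading.free 1 (F.dg i)) (F.dmap i) :=
    isGradedHom_of_map_homogeneous fun e v hv =>
      (isHomogVec_iff _ _ _).1 (F.graded i e v ((isHomogVec_iff _ _ _).2 hv))
  have haug : IsGradedHom (Grading.free 1 (F.dg 0)) (hI.grading 1) F.aug :=
    isGradedHom_of_map_homogeneous fun e v hv =>
      (mem_quotComp_iff hI _ _).1 (F.aug_graded e v ((isHomogVec_iff _ _ _).2 hv))
  have hker (k : ℕ) : ∀ i : ℕ, RegLE k (hmap i).ker (r + i + 1 + 1) := by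
    induction k with
    | zero => exact fun _ => trivial
    | succ k ih =>
      intro i
      refine .ker_of_exact (hmap (i + 1)) (hmap i) (F.exactS i) (fun j => ?_)
        ((ih (i + 1)).mono ?_)
      · exact (hd (i + 2) j).trans (by push_cast; omega)
      · push_cast; omega
  have haugker : ∀ k, RegLE k haug.ker (r + 1)
    | 0 => trivial
    | k + 1 => .ker_of_exact (hmap 0) haug F.exact0 (hd 1) ((hker k 0).mono (by simp))
  cases k with
  | zero => trivial
  | succ k =>
    exact ⟨_, inferInstance, F.dg 0, F.aug, ⟨haug, F.aug_surj⟩, fun j => by simpa using hd 0 j,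
      haugker k⟩

/-- A graded free module with generators in degrees at most `bound`, together with a homogeneous
submodule of relations having partial free resolutions of every length: one stage in the
construction of a graded free resolution. -/
structure ResolutionStage (K : Type) [Field K] {σ : Type} (w : σ → ℤ) where
  rk : ℕ
  deg : Fin rk → ℤ
  bound : ℤ
  deg_le : ∀ j, deg j ≤ bound
  rel : Submodule (MvPolynomial σ K) (Fin rk → MvPolynomial σ K)
  isHomogeneous_rel : (Grading.free w deg).IsHomogeneous rel
  regLE_rel : ∀ k, RegLE k ((Grading.free w deg).restrict isHomogeneous_rel) (bound + 1)

namespace ResolutionStage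

theorem exists_freeCover (h : ∀ k, RegLE k 𝓐 r) :
    ∃ (S : ResolutionStage K w) (p : (Fin S.rk → R) →ₗ[R] A),
      IsFreeCover S.deg 𝓐 p ∧ LinearMap.ker p = S.rel ∧ S.bound = r := by
  obtain ⟨ι, _, d, p, hp, hd, -⟩ := h 1
  let ε := Finite.equivFin ι
  have hp' : IsFreeCover (d ∘ ε.symm) 𝓐 (p ∘ₗ LinearMap.funLeft R R ε) := by
    refine ⟨hp.graded.comp fun e v => funext fun j => ?_,
      hp.surjective.comp (LinearMap.funLeft_surjective_of_injective R R ε ε.injective)⟩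
    simp [LinearMap.funLeft_apply, Grading.free_proj_apply]
  exact ⟨⟨_, d ∘ ε.symm, r, fun j => hd _, _, hp'.graded.isHomogeneous_ker,
    fun k => (h (k + 1)).ker hp' fun j => hd _⟩, _, hp', rfl, rfl⟩

theorem exists_next (S : ResolutionStage K w) :
    ∃ (S' : ResolutionStage K w) (f : (Fin S'.rk → R) →ₗ[R] (Fin S.rk → R)),
      IsGradedHom (Grading.free w S'.deg) (Grading.free w S.deg) f ∧ LinearMap.range f = S.rel ∧
        LinearMap.ker f = S'.rel ∧ S'.bound = S.bound + 1 := by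
  obtain ⟨S', p, hp, hker, hbound⟩ := exists_freeCover S.regLE_rel
  refine ⟨S', S.rel.subtype ∘ₗ p, fun e v => congrArg Subtype.val (hp.graded e v), ?_, ?_, hbound⟩
  · rw [LinearMap.range_comp_of_range_eq_top _ (LinearMap.range_eq_top.2 hp.surjective),
      Submodule.range_subtype]
  · rw [LinearMap.ker_comp, Submodule.ker_subtype, ← hker]
    rfl

end ResolutionStage

theorem resBound_of_regLE {I : Ideal R} (hI : IsMultihomogeneous I)
    (h : ∀ k, RegLE k (hI.grading 1) r) : ResBound K σ I r := by
  obtain ⟨S₀, p, hp, hp_ker, hS₀⟩ := ResolutionStage.exists_freeCover h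
  choose next f hf hf_range hf_ker hnext using
    ResolutionStage.exists_next (K := K) (w := (1 : σ → ℤ))
  let S (i : ℕ) : ResolutionStage K (1 : σ → ℤ) := Nat.rec S₀ (fun _ => next) i
  have hbound (i : ℕ) : (S i).bound = r + i := by
    induction i with
    | zero => exact hS₀.trans (by simp)
    | succ i ih => rw [show (S (i + 1)).bound = (S i).bound + 1 from hnext _, ih]; push_cast; ring
  refine ⟨{
    rk i := (S i).rk
    dg i := (S i).deg
    dmap i := f (S i)
    aug := p
    aug_surj := hp.surjective
    exact0 := LinearMap.exact_iff.2 (hp_ker.trans (hf_range S₀).symm)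
    exactS i := LinearMap.exact_iff.2 ((hf_ker (S i)).trans (hf_range (S (i + 1))).symm)
    graded i e v hv := ?_
    aug_graded e v hv := ?_ }, fun i j => ?_⟩
  · rw [isHomogVec_iff] at hv ⊢
    exact (hf (S i) e v).symm.trans (congrArg _ hv)
  · rw [isHomogVec_iff] at hv
    exact (mem_quotComp_iff hI e _).2 ((hp.graded e v).symm.trans (congrArg _ hv))
  · exact sub_le_iff_le_add.2 (((S i).deg_le j).trans_eq (hbound i))

end Resolutions

/-! ### Castelnuovo–Mumford regularity of monomial ideals -/

section Regularity

variable {K σ : Type} [Field K] {I J : Ideal (MvPolynomial σ K)} {r s : ℤ}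

theorem resBound_top : ResBound K σ ⊤ r := by
  have : Subsingleton (MvPolynomial σ K ⧸ (⊤ : Ideal (MvPolynomial σ K))) :=
    Ideal.Quotient.subsingleton_iff.2 rfl
  exact resBound_of_regLE (fun _ _ _ _ => Submodule.mem_top) fun _ => RegLE.of_subsingleton

theorem resBound_bot : ResBound K σ ⊥ 0 := by
  have hbot : IsMultihomogeneous (⊥ : Ideal (MvPolynomial σ K)) := by
    simpa using isMultihomogeneous_span_monomial (K := K) (∅ : Set (σ →₀ ℕ))
  refine resBound_of_regLE hbot fun k => ?_
  have hring : RegLE k (Grading.ring K (1 : σ → ℤ)) 0 :=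
    (RegLE.free (d := fun _ : Unit => 0) fun _ => le_rfl).of_linearEquiv
      (LinearEquiv.funUnique Unit _ _) fun e v => by simp [Grading.free_proj_apply, Grading.ring]
  exact hring.of_linearEquiv (Submodule.quotEquivOfEqBot ⊥ rfl).symm
    ((Grading.ring K 1).isGradedHom_mkQ (hbot 1))

namespace ResBound

theorem mono (h : ResBound K σ I r) (hrs : r ≤ s) : ResBound K σ I s :=
  let ⟨F, hF⟩ := h
  ⟨F, fun i j => (hF i j).trans hrs⟩

theorem colon_monomial (hI : IsMultihomogeneous I) (h : ResBound K σ I r) (b : σ →₀ ℕ) :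
    ResBound K σ (I.colon (Ideal.span {monomial b (1 : K)})) r := by
  classical
  have colon_X {I : Ideal (MvPolynomial σ K)} (hI : IsMultihomogeneous I) (h : ResBound K σ I r)
      (x : σ) : ResBound K σ (I.colon (Ideal.span {monomial (Finsupp.single x 1) (1 : K)})) r :=
    resBound_of_regLE (hI.colon_monomial _) fun k =>
      hI.regLE_colon_X zero_le_one (regLE_of_resBound hI h k)
  have monomial_add (b c : σ →₀ ℕ) :
      monomial (b + c) (1 : K) = monomial b 1 * monomial c 1 := by
    rw [monomial_mul, mul_one]
  induction b using Finsupp.induction_linear generalizing I with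
  | zero => simpa using h
  | add b c hb hc =>
    rw [monomial_add, colon_span_mul]
    exact hc (hI.colon_monomial b) (hb hI h)
  | single x m =>
    induction m with
    | zero => simpa using h
    | succ m ih =>
      rw [Finsupp.single_add, monomial_add, colon_span_mul]
      exact colon_X (hI.colon_monomial _) ih x

theorem add_span_monomial (hI : IsMultihomogeneous I) (h : ResBound K σ I r) {b : σ →₀ ℕ}
    (hrs : r ≤ s) (hbs : r + b.degree ≤ s + 1) :
    ResBound K σ (I + Ideal.span {monomial b 1}) s := by
  refine resBound_of_regLE (hI.add_span_monomial b) fun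
    | 0 => trivial
    | k + 1 => ?_
  refine hI.regLE_add_span_monomial b (regLE_of_resBound hI (h.mono hrs) _)
    (regLE_of_resBound (hI.colon_monomial b) (h.colon_monomial hI b) k) ?_
  rwa [weight_one_eq_degree]

end ResBound

theorem exists_resBound_span_monomial_finset (S : Finset (σ →₀ ℕ)) :
    ∃ r, ResBound K σ (Ideal.span ((fun s => monomial s 1) '' (S : Set (σ →₀ ℕ)))) r := by
  classical
  induction S using Finset.induction_on with
  | empty => exact ⟨0, by simpa using resBound_bot⟩
  | insert b S _ ih =>
    obtain ⟨r, hr⟩ := ih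
    rw [Finset.coe_insert, Set.image_insert_eq, Ideal.span_insert, sup_comm]
    exact ⟨r + b.degree, hr.add_span_monomial (isMultihomogeneous_span_monomial _) (by omega)
      (by omega)⟩

theorem exists_resBound_span_monomial [Finite σ] (S : Set (σ →₀ ℕ)) :
    ∃ r, ResBound K σ (Ideal.span ((fun s => monomial s 1) '' S)) r := by
  classical
  obtain ⟨G, hG, hspan⟩ := Submodule.fg_span_iff_fg_span_finset_subset _ |>.1
    (IsNoetherian.noetherian (Ideal.span ((fun s => monomial s (1 : K)) '' S)))
  obtain ⟨T, -, rfl⟩ := Finset.subset_set_image_iff.1 hG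
  obtain ⟨r, hr⟩ := exists_resBound_span_monomial_finset (K := K) T
  refine ⟨r, ?_⟩
  rw [Ideal.span, hspan, Finset.coe_image]
  exact hr

theorem CMreg_le_add (c : ℤ) (hI : ∃ r, ResBound K σ I r)
    (h : ∀ r, ResBound K σ I r → ResBound K σ J (r + c)) : CMreg K σ J ≤ CMreg K σ I + c := by
  classical
  by_cases hJ : ∃ r, ResBound K σ J r ∧ ∀ s, ResBound K σ J s → r ≤ s
  · have hImin : ∃ r, ResBound K σ I r ∧ ∀ s, ResBound K σ I s → r ≤ s :=
      Int.exists_least_of_bdd ⟨hJ.choose - c, fun r hr =>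
        sub_le_iff_le_add.2 (hJ.choose_spec.2 _ (h r hr))⟩ hI
    rw [CMreg, CMreg, dif_pos hImin, dif_pos hJ]
    exact WithBot.coe_le_coe.2 (hJ.choose_spec.2 _ (h _ hImin.choose_spec.1))
  · rw [CMreg, dif_neg hJ]
    exact bot_le

end Regularity

section MonomialIdeals

variable {K : Type} [Field K] {n : ℕ} {I : Ideal (MvPoly K (Fin n))}

theorem IsMonomialIdeal.isMultihomogeneous (hI : IsMonomialIdeal K I) : IsMultihomogeneous I := by
  obtain ⟨S, rfl⟩ := hI
  exact isMultihomogeneous_span_monomial S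

theorem IsMonomialIdeal.exists_resBound (hI : IsMonomialIdeal K I) :
    ∃ r, ResBound K (Fin n) I r := by
  obtain ⟨S, rfl⟩ := hI
  exact exists_resBound_span_monomial S

theorem CMreg_colon_le (hI : IsMonomialIdeal K I) (b : Fin n →₀ ℕ) :
    CMreg K (Fin n) (I.colon (Ideal.span {mono K b})) ≤ CMreg K (Fin n) I := by
  have h := CMreg_le_add (J := I.colon (Ideal.span {mono K b})) 0 hI.exists_resBound fun r hr => by
    rw [add_zero]
    exact hr.colon_monomial hI.isMultihomogeneous b
  rwa [WithBot.coe_zero, add_zero] at h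

theorem CMreg_add_le (hI : IsMonomialIdeal K I) (b : Fin n →₀ ℕ) :
    CMreg K (Fin n) (I + Ideal.span {mono K b}) ≤
      CMreg K (Fin n) I + ((b.degree - 1 : ℤ) : WithBot ℤ) := by
  refine CMreg_le_add _ hI.exists_resBound fun r hr => ?_
  rcases eq_or_ne b 0 with rfl | hb
  · have htop : I + Ideal.span {mono K 0} = ⊤ :=
      Ideal.eq_top_of_isUnit_mem _ (Ideal.mem_sup_right (Ideal.mem_span_singleton_self _))
        isUnit_one
    rw [htop]
    exact resBound_top
  · have : b.degree ≠ 0 := mt (Finsupp.degree_eq_zero_iff b).1 hb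
    exact hr.add_span_monomial hI.isMultihomogeneous (by omega) (by omega)

end MonomialIdeals

section Main

variable {K : Type} [Field K] {n : ℕ}

theorem exists_mono_eq_prod_X (T : Finset (Fin n)) :
    ∃ b : Fin n →₀ ℕ, mono K b = ∏ i ∈ T, X i ∧ b.support = T ∧ b.degree = T.card := by
  refine ⟨∑ i ∈ T, Finsupp.single i 1, monomial_sum_one T _, ?_, by simp⟩
  ext j
  simp [Finsupp.finsetSum_apply, Finsupp.single_apply]

theorem stmt2_general {I : Ideal (MvPoly K (Fin n))} (hI : IsMonomialIdeal K I)
    (b : Fin n →₀ ℕ) :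
    (IsSqfreeMonomialIdeal K I →
      depthQ K (Fin n) (I + Ideal.span {mono K b}) ≥ depthQ K (Fin n) I - 1 ∧
      depthQ K (Fin n) I ≤ depthQ K (Fin n) (I.colon (Ideal.span {mono K b})) ∧
      depthQ K (Fin n) (I + Ideal.span (X '' (b.support : Set (Fin n)))) ≥
        depthQ K (Fin n) I - b.support.card) ∧
    CMreg K (Fin n) I ≥ CMreg K (Fin n) (I.colon (Ideal.span {mono K b})) ∧
    CMreg K (Fin n) (I + Ideal.span {mono K b}) ≤
      CMreg K (Fin n) I + ((b.degree - 1 : ℤ) : WithBot ℤ) := by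
  refine ⟨fun hsq => ?_, CMreg_colon_le hI b, CMreg_add_le hI b⟩
  have hcolon := depthQ_le_depthQ_colon hsq b
  exact ⟨depthQ_sub_one_le_depthQ_add hcolon, hcolon, depthQ_sub_card_le_depthQ_add hsq b.support⟩

end Main

/-- for a squarefree monomial ideal `I` and a squarefree monomial
`f = x_{i_1} ⋯ x_{i_k}`, the five listed (mutually equivalent) conditions all hold. -/
theorem stmt2 (K : Type) [Field K] (n : ℕ) (I : Ideal (MvPoly K (Fin n)))
    (hI : IsSqfreeMonomialIdeal K I) (T : Finset (Fin n)) (k : ℕ) (hk : k = T.card)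
    (f : MvPoly K (Fin n)) (hf : f = ∏ i ∈ T, MvPolynomial.X i) :
    (depthQ K (Fin n) (I + Ideal.span {f}) ≥ depthQ K (Fin n) I - 1) ∧
    (depthQ K (Fin n) I ≤ depthQ K (Fin n) (I.colon (Ideal.span {f}))) ∧
    (depthQ K (Fin n)
        (I + Ideal.span ((fun i => (MvPolynomial.X i : MvPoly K (Fin n))) '' ↑T)) ≥
      depthQ K (Fin n) I - (k : ℕ∞)) ∧
    (CMreg K (Fin n) I ≥ CMreg K (Fin n) (I.colon (Ideal.span {f}))) ∧
    (CMreg K (Fin n) (I + Ideal.span {f}) ≤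
      CMreg K (Fin n) I + (((k : ℤ) - 1 : ℤ) : WithBot ℤ)) := by
  obtain ⟨b, hb, rfl, hdegree⟩ := exists_mono_eq_prod_X (K := K) T
  obtain ⟨hdepth, hreg⟩ := hdegree ▸ stmt2_general hI.isMonomialIdeal b
  obtain ⟨hadd, hcolon, hvars⟩ := hdepth hI
  rw [hk, hf, ← hb]
  exact ⟨hadd, hcolon, hvars, hreg⟩
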